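/- There are constants c, c' > 0 such that for any pair (Γ_i, L_j), any integer k ≥ c'·γ_{i+1}^{−2}, and any 0 < δ < 1, with probability at least 1 − δ over a training set S ∼ D^n, both sup over w ∈ H(Γ_i, L_j) of | E_{(x,y)∼D}[φ(y⟨w,x⟩)] − E_{(x,y)∼S}[φ(y⟨w,x⟩)] | and sup over w ∈ H(Γ_i, L_j) of | E_{(x,y)∼D}[ρ(y⟨w,x⟩)] − E_{(x,y)∼S}[ρ(y⟨w,x⟩)] | are at most c·exp(−γ_{i+1}²k/c)·sqrt( (k + γ_{i+1}^{−2} + ln(e/δ))/n ). -/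

import Mathlib

open MeasureTheory ProbabilityTheory

noncomputable section

/-- Dot product on `Fin m → ℝ`. -/
def dotp {m : ℕ} (w x : Fin m → ℝ) : ℝ := ∑ j, w j * x j

/-- Margin loss `L_D^γ(w)` of `w` under a distribution `D` on `ℝ^m × ℝ`
(labels are encoded as reals in `{-1,1}`). -/
def lossD {m : ℕ} (D : Measure ((Fin m → ℝ) × ℝ)) (γ : ℝ) (w : Fin m → ℝ) : ℝ :=
  (D {p | p.2 * dotp w p.1 ≤ γ}).toReal

/-- Empirical margin loss `L_S^γ(w)` on a training set `S` of `n` labeled points. -/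
def lossS {m n : ℕ} (S : Fin n → (Fin m → ℝ) × ℝ) (γ : ℝ) (w : Fin m → ℝ) : ℝ :=
  (Nat.card {i : Fin n // (S i).2 * dotp w (S i).1 ≤ γ} : ℝ) / n

/-- The i.i.d. sample measure `D^n` over training sets of size `n`. -/
def trainM {m : ℕ} (D : Measure ((Fin m → ℝ) × ℝ)) (n : ℕ) :
    Measure (Fin n → (Fin m → ℝ) × ℝ) := Measure.pi fun _ => D

/-- Spacing of the rounding grid: `(10 √k)⁻¹`. -/
def gridStep (k : ℕ) : ℝ := (10 * Real.sqrt k)⁻¹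

/-- The largest grid point `(1/2)(10√k)⁻¹ + z(10√k)⁻¹ ≤ g`. -/
def roundDown (k : ℕ) (g : ℝ) : ℝ :=
  gridStep k / 2 + (⌊(g - gridStep k / 2) / gridStep k⌋ : ℝ) * gridStep k

/-- The probability `p(z)` of rounding `g` down, chosen so the rounding is unbiased. -/
def roundProb (k : ℕ) (g : ℝ) : ℝ := 1 - (g - roundDown k g) / gridStep k

/-- Matrix-vector product, `(Aw)_i = ∑ j A i j * w j`. -/
def matVec {k m : ℕ} (A : Fin k → Fin m → ℝ) (w : Fin m → ℝ) : Fin k → ℝ :=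
  fun i => ∑ j, A i j * w j

/-- The randomized rounding `h_{A,t}(w)` of `Aw` to the grid. -/
def hRound {k m : ℕ} (A : Fin k → Fin m → ℝ) (t : Fin k → ℝ) (w : Fin m → ℝ) :
    Fin k → ℝ :=
  fun i => if t i ≤ roundProb k (matVec A w i)
    then roundDown k (matVec A w i)
    else roundDown k (matVec A w i) + gridStep k

/-- The joint law of `(A, t)`: `A` has i.i.d. `N(0,1/k)` entries and `t` has i.i.d.
uniform `[0,1]` coordinates, independent of `A`. -/
def roundMeasure (k m : ℕ) : Measure ((Fin k → Fin m → ℝ) × (Fin k → ℝ)) :=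
  (Measure.pi fun _ : Fin k => Measure.pi fun _ : Fin m =>
      gaussianReal 0 (k : NNReal)⁻¹).prod
    (Measure.pi fun _ : Fin k => volume.restrict (Set.Icc (0 : ℝ) 1))

/-- Reduced setup: the data domain `X ⊆ S^d ⊂ ℝ^{d+1}` of unit vectors whose first
`d` coordinates have norm at most `cγ`. -/
def Xset (d : ℕ) (cγ : ℝ) : Set (Fin (d+1) → ℝ) :=
  {x | (∑ j, x j ^ 2) = 1 ∧ (∑ j : Fin d, x j.castSucc ^ 2) ≤ cγ ^ 2}

/-- Reduced setup: the hypothesis class `H = S^{d-1} × {0} ⊂ ℝ^{d+1}`. -/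
def Hset (d : ℕ) : Set (Fin (d+1) → ℝ) :=
  {w | (∑ j, w j ^ 2) = 1 ∧ w (Fin.last d) = 0}

/-- `γ_i = 2^{i-1} n^{-1/2}`. -/
def γlo (n i : ℕ) : ℝ := 2 ^ (i - 1) / Real.sqrt n

/-- `γ_{i+1} = 2^i n^{-1/2}`. -/
def γhi (n i : ℕ) : ℝ := 2 ^ i / Real.sqrt n

/-- `ℓ_{j+1} = 2^j n^{-1}`. -/
def ellhi (n j : ℕ) : ℝ := 2 ^ j / n

/-- The interval `L_j`: `L_0 = [0, n⁻¹]`, and `L_j = (2^{j-1}/n, 2^j/n]` for `j ≥ 1`. -/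
def Lset (n j : ℕ) : Set ℝ :=
  if j = 0 then Set.Icc 0 (n : ℝ)⁻¹
  else Set.Ioc ((2 : ℝ) ^ (j - 1) / n) ((2 : ℝ) ^ j / n)

/-- Margin loss of `h ∈ ℝ^k` under the pushforward distribution `A·D`. -/
def kLossD {k m : ℕ} (D : Measure ((Fin m → ℝ) × ℝ)) (γ : ℝ) (h : Fin k → ℝ)
    (A : Fin k → Fin m → ℝ) : ℝ :=
  (D {q | q.2 * (∑ r, h r * ∑ s, A r s * q.1 s) ≤ γ}).toReal

/-- Empirical margin loss of `h ∈ ℝ^k` on the transformed training set `A·S`. -/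
def kLossS {k m n : ℕ} (S : Fin n → (Fin m → ℝ) × ℝ) (γ : ℝ) (h : Fin k → ℝ)
    (A : Fin k → Fin m → ℝ) : ℝ :=
  (Nat.card {i : Fin n // (S i).2 * (∑ r, h r * ∑ s, A r s * (S i).1 s) ≤ γ} : ℝ) / n

/-- Specification of the function `φ` from the paper, for margin parameter `γi`:
on `[-cγ, 0]` it equals the probability (over the randomized rounding) that the rounded
margin exceeds `γi/2` given original margin `α`; on `(0, γi]` it interpolates linearly to
`0`; on `(γi, cγ]` it is `0`. -/
def phiSpec (d k : ℕ) (cγ γi : ℝ) (φ : ℝ → ℝ) : Prop :=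
  (∀ (w x : Fin (d+1) → ℝ) (y : ℝ), w ∈ Hset d → x ∈ Xset d cγ →
      (y = 1 ∨ y = -1) → y * dotp w x ≤ 0 →
      φ (y * dotp w x) =
        (roundMeasure k (d+1)
          {p | γi / 2 < y * ∑ r, hRound p.1 p.2 w r * ∑ s, p.1 r s * x s}).toReal) ∧
  (∀ α : ℝ, 0 < α → α ≤ γi → φ α = ((γi - α) / γi) * φ 0) ∧
  (∀ α : ℝ, γi < α → α ≤ cγ → φ α = 0)

/-- Specification of the function `ρ` from the paper, for margin parameter `γi`. -/
def rhoSpec (d k : ℕ) (cγ γi : ℝ) (ρ : ℝ → ℝ) : Prop :=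
  (∀ (w x : Fin (d+1) → ℝ) (y : ℝ), w ∈ Hset d → x ∈ Xset d cγ →
      (y = 1 ∨ y = -1) → γi < y * dotp w x →
      ρ (y * dotp w x) =
        (roundMeasure k (d+1)
          {p | y * ∑ r, hRound p.1 p.2 w r * ∑ s, p.1 r s * x s ≤ γi / 2}).toReal) ∧
  (∀ α : ℝ, 0 < α → α ≤ γi →
      ∀ (w x : Fin (d+1) → ℝ) (y : ℝ), w ∈ Hset d → x ∈ Xset d cγ →
      (y = 1 ∨ y = -1) → y * dotp w x = γi →
      ρ α = (α / γi) *
        (roundMeasure k (d+1)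
          {p | y * ∑ r, hRound p.1 p.2 w r * ∑ s, p.1 r s * x s ≤ γi / 2}).toReal) ∧
  (∀ α : ℝ, -cγ ≤ α → α ≤ 0 → ρ α = 0)

theorem integrable_of_measurable_of_bounded {Ω : Type*} [MeasurableSpace Ω] {μ : Measure Ω}
    [IsFiniteMeasure μ] {F : Ω → ℝ} (hF : Measurable F) {C : ℝ} (hC : ∀ x, |F x| ≤ C) :
    Integrable F μ :=
  Integrable.of_bound hF.aestronglyMeasurable C (Filter.Eventually.of_forall hC)

theorem abs_integral_le_of_bounded {Ω : Type*} [MeasurableSpace Ω] {μ : Measure Ω}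
    [IsProbabilityMeasure μ] {F : Ω → ℝ} {C : ℝ} (hC : ∀ x, |F x| ≤ C) :
    |∫ x, F x ∂μ| ≤ C := by
  simpa using norm_integral_le_of_norm_le_const (μ := μ) (f := F) (C := C)
    (Filter.Eventually.of_forall hC)

theorem measurable_finCons {Ω : Type*} [MeasurableSpace Ω] (n : ℕ) :
    Measurable fun p : Ω × (Fin n → Ω) => (Fin.cons p.1 p.2 : Fin (n + 1) → Ω) := by
  refine measurable_pi_lambda _ fun i => ?_
  refine Fin.cases ?_ (fun j => ?_) i
  · simpa using measurable_fst
  · simp only [Fin.cons_succ]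
    fun_prop

theorem integral_pi_finSucc {Ω : Type*} [MeasurableSpace Ω] (μ : Measure Ω)
    [IsProbabilityMeasure μ] {n : ℕ} (F : (Fin (n + 1) → Ω) → ℝ) :
    ∫ x, F x ∂(Measure.pi fun _ => μ) =
      ∫ p : Ω × (Fin n → Ω), F (Fin.cons p.1 p.2) ∂(μ.prod (Measure.pi fun _ => μ)) := by
  have h := (measurePreserving_piFinSuccAbove (fun _ : Fin (n + 1) => μ) 0).symm
  rw [← h.integral_comp (MeasurableEquiv.measurableEmbedding _)]
  simp [MeasurableEquiv.piFinSuccAbove]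
  rfl

theorem integral_exp_le_of_bounded_range {Ω : Type*} [MeasurableSpace Ω] (μ : Measure Ω)
    [IsProbabilityMeasure μ] {G : Ω → ℝ} (hG : Measurable G) {C : ℝ} (hC : ∀ z, |G z| ≤ C)
    {c : ℝ} (hc : ∀ z z', G z - G z' ≤ c) (l : ℝ) :
    ∫ z, Real.exp (l * G z) ∂μ ≤ Real.exp (l * ∫ z, G z ∂μ + l ^ 2 * c ^ 2 / 8) := by
  have hne : Nonempty Ω := nonempty_of_isProbabilityMeasure μ
  have hbdd : BddBelow (Set.range G) :=
    ⟨-C, by rintro _ ⟨z, rfl⟩; exact (abs_le.1 (hC z)).1⟩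
  have hmem : ∀ z, G z ∈ Set.Icc (⨅ z, G z) ((⨅ z, G z) + c) := fun z =>
    ⟨ciInf_le hbdd z, by
      have : G z - c ≤ ⨅ z, G z := le_ciInf fun z' => by linarith [hc z z']
      linarith⟩
  have h := (hasSubgaussianMGF_of_mem_Icc (μ := μ) hG.aemeasurable
    (Filter.Eventually.of_forall hmem)).mgf_le l
  rw [mgf] at h
  have e : ∀ z, Real.exp (l * G z) =
      Real.exp (l * ∫ z, G z ∂μ) * Real.exp (l * (G z - ∫ z, G z ∂μ)) := fun z => by
    rw [← Real.exp_add]; ring_nf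
  simp_rw [e]
  rw [integral_const_mul, Real.exp_add]
  refine mul_le_mul_of_nonneg_left (h.trans (le_of_eq ?_)) (Real.exp_pos _).le
  congr 1
  simp [div_pow]
  ring

/-- The exponential-moment form of McDiarmid's bounded difference inequality. -/
theorem integral_exp_le_of_bounded_differences {Ω : Type*} [MeasurableSpace Ω] (μ : Measure Ω)
    [IsProbabilityMeasure μ] (c l : ℝ) (n : ℕ) (F : (Fin n → Ω) → ℝ) (hF : Measurable F)
    {C : ℝ} (hC : ∀ x, |F x| ≤ C)
    (hc : ∀ x i y, F (Function.update x i y) - F x ≤ c) :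
    ∫ x, Real.exp (l * F x) ∂(Measure.pi fun _ => μ) ≤
      Real.exp (l * ∫ x, F x ∂(Measure.pi fun _ => μ) + n * (l ^ 2 * c ^ 2 / 8)) := by
  induction n with
  | zero =>
    have : ∀ x, F x = F default := fun x => by congr 1; exact Subsingleton.elim _ _
    simp only [this]
    simp
  | succ n ih =>
    have hcons := measurable_finCons (Ω := Ω) n
    have hFc : Measurable fun p : Ω × (Fin n → Ω) => F (Fin.cons p.1 p.2) := hF.comp hcons
    have hint : Integrable (fun p : Ω × (Fin n → Ω) => F (Fin.cons p.1 p.2))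
        (μ.prod (Measure.pi fun _ => μ)) :=
      integrable_of_measurable_of_bounded hFc (C := C) fun p => hC _
    have hexp_le : ∀ x, |Real.exp (l * F x)| ≤ Real.exp (|l| * C) := fun x => by
      rw [abs_of_pos (Real.exp_pos _)]
      refine Real.exp_le_exp.2 ((le_abs_self _).trans ?_)
      rw [abs_mul]
      exact mul_le_mul_of_nonneg_left (hC x) (abs_nonneg _)
    have hint' : Integrable (fun p : Ω × (Fin n → Ω) => Real.exp (l * F (Fin.cons p.1 p.2)))
        (μ.prod (Measure.pi fun _ => μ)) :=
      integrable_of_measurable_of_bounded (by fun_prop) (fun p => hexp_le _)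
    rw [integral_pi_finSucc, integral_pi_finSucc, integral_prod _ hint, integral_prod _ hint']
    set G : Ω → ℝ := fun z => ∫ x, F (Fin.cons z x) ∂(Measure.pi fun _ => μ) with hG
    have hGm : Measurable G :=
      (hFc.stronglyMeasurable.integral_prod_right (ν := Measure.pi fun _ => μ)).measurable
    have hGC : ∀ z, |G z| ≤ C := fun z => abs_integral_le_of_bounded fun x => hC _
    have hslice : ∀ z, Integrable (fun x : Fin n → Ω => F (Fin.cons z x))
        (Measure.pi fun _ => μ) := fun z =>
      integrable_of_measurable_of_bounded (hFc.comp measurable_prodMk_left) (fun x => hC _)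
    have hGc : ∀ z z', G z - G z' ≤ c := fun z z' => by
      rw [hG]
      simp only
      rw [← integral_sub (hslice z) (hslice z')]
      have : ∀ x : Fin n → Ω, F (Fin.cons z x) - F (Fin.cons z' x) ≤ c := fun x => by
        have := hc (Fin.cons z' x) 0 z
        rwa [Fin.update_cons_zero] at this
      simpa using integral_mono (μ := Measure.pi fun _ : Fin n => μ)
        ((hslice z).sub (hslice z')) (integrable_const c) this
    have step : ∀ z, ∫ x, Real.exp (l * F (Fin.cons z x)) ∂(Measure.pi fun _ => μ) ≤
        Real.exp (n * (l ^ 2 * c ^ 2 / 8)) * Real.exp (l * G z) := fun z => by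
      have := ih (fun x => F (Fin.cons z x)) (hFc.comp measurable_prodMk_left)
        (fun x => hC _) (fun x i y => by
          have := hc (Fin.cons z x) i.succ y
          rwa [← Fin.cons_update] at this)
      rwa [Real.exp_add, mul_comm] at this
    refine (integral_mono hint'.integral_prod_left (Integrable.const_mul
      (integrable_of_measurable_of_bounded (C := Real.exp (|l| * C)) (by fun_prop) fun z => ?_) _)
      step).trans ?_
    · rw [abs_of_pos (Real.exp_pos _)]
      refine Real.exp_le_exp.2 ((le_abs_self _).trans ?_)
      rw [abs_mul]
      exact mul_le_mul_of_nonneg_left (hGC z) (abs_nonneg _)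
    rw [integral_const_mul]
    refine (mul_le_mul_of_nonneg_left (integral_exp_le_of_bounded_range μ hGm hGC hGc l)
      (Real.exp_pos _).le).trans (le_of_eq ?_)
    rw [← Real.exp_add]
    congr 1
    push_cast
    ring

/-- McDiarmid's bounded difference inequality, in high-probability form. -/
theorem measureReal_gt_le_of_bounded_differences {Ω : Type*} [MeasurableSpace Ω] (μ : Measure Ω)
    [IsProbabilityMeasure μ] {c : ℝ} (hc0 : 0 < c) {n : ℕ} (hn : 1 ≤ n) (F : (Fin n → Ω) → ℝ)
    (hF : Measurable F) {C : ℝ} (hC : ∀ x, |F x| ≤ C)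
    (hc : ∀ x i y, F (Function.update x i y) - F x ≤ c) {δ : ℝ} (hδ : 0 < δ) (hδ1 : δ ≤ 1) :
    (Measure.pi fun _ => μ).real
      {x | ∫ x, F x ∂(Measure.pi fun _ => μ) + c * √(n * Real.log (1 / δ) / 2) < F x} ≤ δ := by
  have hn0 : (0 : ℝ) < n := by exact_mod_cast hn
  have hlog : 0 ≤ Real.log (1 / δ) := Real.log_nonneg (by rw [le_div_iff₀ hδ]; linarith)
  set m := ∫ x, F x ∂(Measure.pi fun _ => μ) with hm
  set l : ℝ := 4 * √(n * Real.log (1 / δ) / 2) / (n * c) with hl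
  have hl0 : 0 ≤ l := by positivity
  have hs : √(n * Real.log (1 / δ) / 2) ^ 2 = n * Real.log (1 / δ) / 2 :=
    Real.sq_sqrt (by positivity)
  set s := √(n * Real.log (1 / δ) / 2)
  have hint : Integrable (fun x => Real.exp (l * F x)) (Measure.pi fun _ : Fin n => μ) := by
    refine integrable_of_measurable_of_bounded (C := Real.exp (l * C)) (by fun_prop) fun x => ?_
    rw [abs_of_pos (Real.exp_pos _)]
    exact Real.exp_le_exp.2 (mul_le_mul_of_nonneg_left ((le_abs_self _).trans (hC x)) hl0)
  have h1 := measure_ge_le_exp_mul_mgf (μ := Measure.pi fun _ : Fin n => μ) (X := F)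
    (m + c * s) hl0 hint
  refine (measureReal_mono (h₂ := measure_ne_top _ _)
    (fun x (hx : m + c * s < F x) => (hx.le : m + c * s ≤ F x))).trans (h1.trans ?_)
  refine (mul_le_mul_of_nonneg_left
    (integral_exp_le_of_bounded_differences μ c l n F hF hC hc) (Real.exp_pos _).le).trans ?_
  rw [← Real.exp_add, ← hm]
  have hd : δ = Real.exp (-Real.log (1 / δ)) := by
    rw [one_div, Real.log_inv, neg_neg, Real.exp_log hδ]
  refine le_of_eq (Eq.trans ?_ hd.symm)
  congr 1
  have e1 : l * (c * s) = 2 * Real.log (1 / δ) := by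
    rw [hl]; field_simp; rw [hs]; ring
  have e2 : (n : ℝ) * (l ^ 2 * c ^ 2 / 8) = Real.log (1 / δ) := by
    rw [hl]; field_simp; rw [hs]; field_simp; ring
  rw [e2]
  linear_combination -e1

theorem abs_iSup_le_of_finite {ι : Type*} [Finite ι] [Nonempty ι] {a : ι → ℝ} {C : ℝ}
    (h : ∀ i, |a i| ≤ C) : |⨆ i, a i| ≤ C := by
  obtain ⟨i, hi⟩ := exists_eq_ciSup_of_finite (f := a)
  rw [← hi]
  exact h i

/-- The two-point contraction principle for a finite supremum. -/
theorem iSup_add_iSup_sub_le {ι : Type*} [Finite ι] [Nonempty ι] {a g u : ι → ℝ}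
    (h : ∀ i j, g i - g j ≤ |u i - u j|) :
    (⨆ i, (a i + g i)) + (⨆ i, (a i - g i)) ≤ (⨆ i, (a i + u i)) + (⨆ i, (a i - u i)) := by
  obtain ⟨i, hi⟩ := exists_eq_ciSup_of_finite (f := fun i => a i + g i)
  obtain ⟨j, hj⟩ := exists_eq_ciSup_of_finite (f := fun i => a i - g i)
  rw [← hi, ← hj]
  have hp : ∀ i, a i + u i ≤ ⨆ i, (a i + u i) := le_ciSup (Set.finite_range _).bddAbove
  have hm : ∀ i, a i - u i ≤ ⨆ i, (a i - u i) := le_ciSup (Set.finite_range _).bddAbove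
  have hij := h i j
  rcases abs_cases (u i - u j) with ⟨e, _⟩ | ⟨e, _⟩
  · linarith [hp i, hm j]
  · linarith [hp j, hm i]

theorem integral_iSup_sub_le {Ω ι : Type*} [MeasurableSpace Ω] (μ : Measure Ω)
    [IsProbabilityMeasure μ] [Finite ι] [Nonempty ι] (a : ι → ℝ) {u g : ι → Ω → ℝ}
    (hu : ∀ i, Measurable (u i)) (hg : ∀ i, Measurable (g i)) {Cu Cg : ℝ}
    (hCu : ∀ i ω, |u i ω| ≤ Cu) (hCg : ∀ i ω, |g i ω| ≤ Cg)
    (h : ∀ i j ω, 2 * g i ω - 2 * g j ω ≤ |u i ω - u j ω|) :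
    ∫ z, ⨆ i, (a i + (∫ z', g i z' ∂μ - g i z)) ∂μ ≤
      ∫ z, ((⨆ i, (a i + u i z)) + ⨆ i, (a i - u i z)) / 2 ∂μ := by
  obtain ⟨Ca, hCa⟩ := (Set.finite_range fun i => |a i|).bddAbove
  replace hCa : ∀ i, |a i| ≤ Ca := fun i => hCa ⟨i, rfl⟩
  have bdd : ∀ b : ι → ℝ, BddAbove (Set.range b) := fun b => (Set.finite_range _).bddAbove
  have int_of : ∀ (b : ι → Ω → ℝ) (C : ℝ), (∀ i, Measurable (b i)) → (∀ i ω, |b i ω| ≤ C) →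
      Integrable (fun z => ⨆ i, (a i + b i z)) μ := fun b C hb hC =>
    integrable_of_measurable_of_bounded (C := Ca + C)
      (Measurable.iSup fun i => (hb i).const_add _) fun z => abs_iSup_le_of_finite fun i =>
        (abs_add_le _ _).trans (add_le_add (hCa i) (hC i z))
  have I1 := int_of (fun i z => 2 * g i z) (2 * Cg) (fun i => (hg i).const_mul _)
    fun i z => by rw [abs_mul, abs_two]; linarith [hCg i z]
  have I2 : Integrable (fun z => ⨆ i, (a i - 2 * g i z)) μ := by
    simpa only [sub_eq_add_neg] using int_of (fun i z => -(2 * g i z)) (2 * Cg)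
      (fun i => ((hg i).const_mul _).neg)
      fun i z => by rw [abs_neg, abs_mul, abs_two]; linarith [hCg i z]
  have I3 := int_of u Cu hu hCu
  have I4 : Integrable (fun z => ⨆ i, (a i - u i z)) μ := by
    simpa only [sub_eq_add_neg] using int_of (fun i z => -u i z) Cu (fun i => (hu i).neg)
      fun i z => by rw [abs_neg]; exact hCu i z
  have I5 := int_of (fun i z => ∫ z', g i z' ∂μ - g i z) (Cg + Cg)
    (fun i => measurable_const.sub (hg i)) fun i z =>
      (abs_sub _ _).trans (add_le_add (abs_integral_le_of_bounded (hCg i)) (hCg i z))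
  have gi : ∀ i, Integrable (g i) μ := fun i =>
    integrable_of_measurable_of_bounded (hg i) (hCg i)
  have key : ∀ z, ⨆ i, (a i + (∫ z', g i z' ∂μ - g i z)) ≤
      (∫ z', (⨆ i, (a i + 2 * g i z')) ∂μ + ⨆ i, (a i - 2 * g i z)) / 2 := fun z => by
    refine ciSup_le fun i => ?_
    have h1 : a i + 2 * ∫ z', g i z' ∂μ ≤ ∫ z', (⨆ i, (a i + 2 * g i z')) ∂μ := by
      have : a i + 2 * ∫ z', g i z' ∂μ = ∫ z', (a i + 2 * g i z') ∂μ := by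
        rw [integral_add (integrable_const _) ((gi i).const_mul _), integral_const_mul]
        simp
      rw [this]
      exact integral_mono ((integrable_const _).add ((gi i).const_mul _)) I1
        fun z' => le_ciSup (bdd fun i => a i + 2 * g i z') i
    have h2 := le_ciSup (bdd fun i => a i - 2 * g i z) i
    linarith
  refine (integral_mono I5 (((integrable_const _).add I2).div_const 2) key).trans ?_
  rw [integral_div, integral_div, integral_add' (integrable_const _) I2]
  simp only [integral_const, probReal_univ, one_smul]
  rw [← integral_add I1 I2]
  refine div_le_div_of_nonneg_right (integral_mono (I1.add I2) (I3.add I4) fun z => ?_)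
    zero_le_two
  exact iSup_add_iSup_sub_le (a := a) fun i j => h i j z

theorem sqrt_norm_add_sub_le {E : Type*} [NormedAddCommGroup E] [InnerProductSpace ℝ E]
    (v z : E) {b : ℝ} (hb : 0 ≤ b) :
    (√(‖v + z‖ ^ 2 + b) + √(‖v - z‖ ^ 2 + b)) / 2 ≤ √(‖v‖ ^ 2 + ‖z‖ ^ 2 + b) := by
  have hp := parallelogram_law_with_norm ℝ v z
  refine Real.le_sqrt_of_sq_le ?_
  have h1 := Real.sq_sqrt (show 0 ≤ ‖v + z‖ ^ 2 + b by positivity)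
  have h2 := Real.sq_sqrt (show 0 ≤ ‖v - z‖ ^ 2 + b by positivity)
  nlinarith [sq_nonneg (√(‖v + z‖ ^ 2 + b) - √(‖v - z‖ ^ 2 + b))]

/-- The expected uniform deviation of a Lipschitz function of a linear functional, over a finite
family of functionals of norm at most one. -/
theorem integral_iSup_deviation_le {Ω ι E : Type*} [MeasurableSpace Ω] (μ : Measure Ω)
    [IsProbabilityMeasure μ] [Finite ι] [Nonempty ι] [NormedAddCommGroup E]
    [InnerProductSpace ℝ E] {w : ι → E} (hw : ∀ i, ‖w i‖ ≤ 1) {Z : Ω → E}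
    (hZm : ∀ i, Measurable fun ω => inner ℝ (w i) (Z ω)) (hZ : ∀ ω, ‖Z ω‖ ≤ 1)
    {f : ℝ → ℝ} {L B : ℝ} (hL : 0 ≤ L) (hf : ∀ x y, |f x - f y| ≤ L * |x - y|)
    (hfm : Measurable f) (hB : ∀ x, |f x| ≤ B) (n : ℕ) (v : E) :
    ∫ S : Fin n → Ω, ⨆ i, (inner ℝ (w i) v + ∑ r,
        (∫ z, f (inner ℝ (w i) (Z z)) ∂μ - f (inner ℝ (w i) (Z (S r)))))
        ∂(Measure.pi fun _ => μ) ≤ √(‖v‖ ^ 2 + 4 * L ^ 2 * n) := by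
  induction n generalizing v with
  | zero =>
    simp only [Finset.univ_eq_empty, Finset.sum_empty, add_zero, integral_const, probReal_univ,
      one_smul, Nat.cast_zero, mul_zero, Real.sqrt_sq (norm_nonneg _)]
    refine ciSup_le fun i => (real_inner_le_norm _ _).trans ?_
    exact mul_le_of_le_one_left (norm_nonneg _) (hw i)
  | succ n ih =>
    set m : ι → ℝ := fun i => ∫ z, f (inner ℝ (w i) (Z z)) ∂μ with hm
    have hmB : ∀ i, |m i| ≤ B := fun i => abs_integral_le_of_bounded fun z => hB _
    have hiv : ∀ i v, |inner ℝ (w i) v| ≤ ‖v‖ := fun i v =>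
      (abs_real_inner_le_norm _ _).trans (mul_le_of_le_one_left (norm_nonneg _) (hw i))
    set R : ι → (Fin n → Ω) → ℝ := fun i x => ∑ r, (m i - f (inner ℝ (w i) (Z (x r)))) with hR
    have hfi : ∀ i, Measurable fun ω => f (inner ℝ (w i) (Z ω)) := fun i => hfm.comp (hZm i)
    have hRm : ∀ i, Measurable (R i) := fun i =>
      Finset.measurable_sum _ fun r _ => measurable_const.sub ((hfi i).comp (measurable_pi_apply r))
    have hRC : ∀ i x, |R i x| ≤ n * (B + B) := fun i x => by
      refine (Finset.abs_sum_le_sum_abs _ _).trans ((Finset.sum_le_card_nsmul _ _ (B + B)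
        fun r _ => (abs_sub _ _).trans (add_le_add (hmB i) (hB _))).trans (le_of_eq ?_))
      simp only [Finset.card_univ, Fintype.card_fin, nsmul_eq_mul]
    rw [integral_pi_finSucc]
    simp only [Fin.sum_univ_succ, Fin.cons_zero, Fin.cons_succ]
    have e0 : ∀ (p : Ω × (Fin n → Ω)) i, inner ℝ (w i) v + (m i - f (inner ℝ (w i) (Z p.1)) +
        ∑ r, (m i - f (inner ℝ (w i) (Z (p.2 r))))) =
        (inner ℝ (w i) v + R i p.2) + (m i - f (inner ℝ (w i) (Z p.1))) := fun p i => by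
      rw [hR]; ring
    have hm' : ∀ i, ∫ z, f (inner ℝ (w i) (Z z)) ∂μ = m i := fun _ => rfl
    simp only [hm', e0]
    have J1 : Integrable (fun p : Ω × (Fin n → Ω) => ⨆ i, ((inner ℝ (w i) v + R i p.2) +
        (m i - f (inner ℝ (w i) (Z p.1))))) (μ.prod (Measure.pi fun _ => μ)) := by
      refine integrable_of_measurable_of_bounded (C := (‖v‖ + n * (B + B)) + (B + B))
        (Measurable.iSup fun i => (measurable_const.add ((hRm i).comp measurable_snd)).add
          (measurable_const.sub ((hfi i).comp measurable_fst))) fun p =>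
        abs_iSup_le_of_finite fun i => (abs_add_le _ _).trans (add_le_add
          ((abs_add_le _ _).trans (add_le_add (hiv i v) (hRC i _)))
          ((abs_sub _ _).trans (add_le_add (hmB i) (hB _))))
    have hZu : ∀ i z, |2 * L * inner ℝ (w i) (Z z)| ≤ 2 * L := fun i z => by
      rw [abs_mul, abs_of_nonneg (by positivity)]
      exact mul_le_of_le_one_right (by positivity) ((hiv i _).trans (hZ z))
    have hum : ∀ i, Measurable fun z => 2 * L * inner ℝ (w i) (Z z) := fun i =>
      (hZm i).const_mul _
    have J2 : Integrable (fun p : Ω × (Fin n → Ω) => ⨆ i, ((inner ℝ (w i) v + R i p.2) +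
        2 * L * inner ℝ (w i) (Z p.1))) (μ.prod (Measure.pi fun _ => μ)) := by
      refine integrable_of_measurable_of_bounded (C := (‖v‖ + n * (B + B)) + 2 * L)
        (Measurable.iSup fun i => (measurable_const.add ((hRm i).comp measurable_snd)).add
          ((hum i).comp measurable_fst)) fun p =>
        abs_iSup_le_of_finite fun i => (abs_add_le _ _).trans (add_le_add
          ((abs_add_le _ _).trans (add_le_add (hiv i v) (hRC i _))) (hZu i _))
    have J3 : Integrable (fun p : Ω × (Fin n → Ω) => ⨆ i, ((inner ℝ (w i) v + R i p.2) -
        2 * L * inner ℝ (w i) (Z p.1))) (μ.prod (Measure.pi fun _ => μ)) := by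
      refine integrable_of_measurable_of_bounded (C := (‖v‖ + n * (B + B)) + 2 * L)
        (Measurable.iSup fun i => (measurable_const.add ((hRm i).comp measurable_snd)).sub
          ((hum i).comp measurable_fst)) fun p =>
        abs_iSup_le_of_finite fun i => (abs_sub _ _).trans (add_le_add
          ((abs_add_le _ _).trans (add_le_add (hiv i v) (hRC i _))) (hZu i _))
    have J4 := (J2.add J3).div_const 2
    rw [integral_prod_symm _ J1]
    refine (integral_mono J1.integral_prod_right J4.integral_prod_right fun x => ?_).trans ?_
    · refine integral_iSup_sub_le μ (fun i => inner ℝ (w i) v + R i x) hum hfi hZu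
        (fun i ω => hB _) fun i j ω => ?_
      rw [← mul_sub, ← mul_sub, abs_mul, abs_of_nonneg (show 0 ≤ 2 * L by positivity)]
      linarith [(abs_le.1 (hf (inner ℝ (w i) (Z ω)) (inner ℝ (w j) (Z ω)))).2]
    rw [← integral_prod_symm _ J4, integral_prod _ J4]
    have hz : ∀ z, ∫ x, ((⨆ i, ((inner ℝ (w i) v + R i x) + 2 * L * inner ℝ (w i) (Z z))) +
        ⨆ i, ((inner ℝ (w i) v + R i x) - 2 * L * inner ℝ (w i) (Z z))) / 2
        ∂(Measure.pi fun _ => μ) ≤ √(‖v‖ ^ 2 + 4 * L ^ 2 * (n + 1 : ℕ)) := fun z => by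
      have K2 : Integrable (fun x => ⨆ i, ((inner ℝ (w i) v + R i x) +
          2 * L * inner ℝ (w i) (Z z))) (Measure.pi fun _ => μ) := by
        refine integrable_of_measurable_of_bounded (C := (‖v‖ + n * (B + B)) + 2 * L)
          (Measurable.iSup fun i => (measurable_const.add (hRm i)).add measurable_const)
          fun p => abs_iSup_le_of_finite fun i => (abs_add_le _ _).trans (add_le_add
          ((abs_add_le _ _).trans (add_le_add (hiv i v) (hRC i _))) (hZu i _))
      have K3 : Integrable (fun x => ⨆ i, ((inner ℝ (w i) v + R i x) -
          2 * L * inner ℝ (w i) (Z z))) (Measure.pi fun _ => μ) := by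
        refine integrable_of_measurable_of_bounded (C := (‖v‖ + n * (B + B)) + 2 * L)
          (Measurable.iSup fun i => (measurable_const.add (hRm i)).sub measurable_const)
          fun p => abs_iSup_le_of_finite fun i => (abs_sub _ _).trans (add_le_add
          ((abs_add_le _ _).trans (add_le_add (hiv i v) (hRC i _))) (hZu i _))
      rw [integral_div, integral_add K2 K3]
      have h1 := ih (v + (2 * L) • Z z)
      have h2 := ih (v - (2 * L) • Z z)
      simp only [inner_add_right, inner_sub_right, inner_smul_right] at h1 h2
      have e1 : ∀ i x, inner ℝ (w i) v + R i x + 2 * L * inner ℝ (w i) (Z z) =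
        inner ℝ (w i) v + 2 * L * inner ℝ (w i) (Z z) + R i x := fun i x => by ring
      have e2 : ∀ i x, inner ℝ (w i) v + R i x - 2 * L * inner ℝ (w i) (Z z) =
        inner ℝ (w i) v - 2 * L * inner ℝ (w i) (Z z) + R i x := fun i x => by ring
      simp only [e1, e2]
      refine (div_le_div_of_nonneg_right (add_le_add h1 h2) zero_le_two).trans
        ((sqrt_norm_add_sub_le v ((2 * L) • Z z) (by positivity)).trans
          (Real.sqrt_le_sqrt ?_))
      have h3 : ‖(2 * L) • Z z‖ ≤ 2 * L := by
        rw [norm_smul, Real.norm_of_nonneg (by positivity)]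
        exact mul_le_of_le_one_right (by positivity) (hZ z)
      have h4 := pow_le_pow_left₀ (norm_nonneg _) h3 2
      push_cast
      nlinarith
    refine (integral_mono J4.integral_prod_left (integrable_const _) hz).trans (le_of_eq ?_)
    simp

theorem measureReal_iSup_deviation_le {Ω ι E : Type*} [MeasurableSpace Ω] (μ : Measure Ω)
    [IsProbabilityMeasure μ] [Finite ι] [Nonempty ι] [NormedAddCommGroup E]
    [InnerProductSpace ℝ E] {w : ι → E} (hw : ∀ i, ‖w i‖ ≤ 1) {Z : Ω → E}
    (hZm : ∀ i, Measurable fun ω => inner ℝ (w i) (Z ω)) (hZ : ∀ ω, ‖Z ω‖ ≤ 1)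
    {f : ℝ → ℝ} {L B : ℝ} (hL : 0 ≤ L) (hB0 : 0 < B) (hf : ∀ x y, |f x - f y| ≤ L * |x - y|)
    (hfm : Measurable f) (hf0 : ∀ x, 0 ≤ f x) (hfB : ∀ x, f x ≤ B) {n : ℕ} (hn : 1 ≤ n)
    {δ : ℝ} (hδ : 0 < δ) (hδ1 : δ ≤ 1) :
    (Measure.pi fun _ : Fin n => μ).real {S | 2 * L * √n + B * √(n * Real.log (1 / δ) / 2) <
      ⨆ i, ∑ r, (∫ z, f (inner ℝ (w i) (Z z)) ∂μ - f (inner ℝ (w i) (Z (S r))))} ≤ δ := by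
  have hB : ∀ x, |f x| ≤ B := fun x => abs_le.2 ⟨by linarith [hf0 x], hfB x⟩
  have hfi : ∀ i, Measurable fun ω => f (inner ℝ (w i) (Z ω)) := fun i => hfm.comp (hZm i)
  have hmean := integral_iSup_deviation_le μ hw hZm hZ hL hf hfm hB n 0
  have hs : √(‖(0 : E)‖ ^ 2 + 4 * L ^ 2 * n) = 2 * L * √n := by
    rw [norm_zero, show (0 : ℝ) ^ 2 + 4 * L ^ 2 * n = (2 * L) ^ 2 * n by ring,
      Real.sqrt_mul (by positivity), Real.sqrt_sq (by positivity)]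
  simp only [inner_zero_right, zero_add, hs] at hmean
  refine (measureReal_mono (h₂ := measure_ne_top _ _) fun S hS =>
    (add_le_add hmean le_rfl).trans_lt hS).trans
    (measureReal_gt_le_of_bounded_differences μ hB0 hn
      (fun S : Fin n → Ω => ⨆ i, ∑ r, (∫ z, f (inner ℝ (w i) (Z z)) ∂μ -
        f (inner ℝ (w i) (Z (S r))))) (C := n * (B + B)) ?_ ?_ ?_ hδ hδ1)
  · exact Measurable.iSup fun i => Finset.measurable_sum _ fun r _ =>
      measurable_const.sub ((hfi i).comp (measurable_pi_apply r))
  · refine fun x => abs_iSup_le_of_finite fun i => ?_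
    refine (Finset.abs_sum_le_sum_abs _ _).trans ((Finset.sum_le_card_nsmul _ _ (B + B)
      fun r _ => (abs_sub _ _).trans (add_le_add (abs_integral_le_of_bounded fun z => hB _)
        (hB _))).trans (le_of_eq ?_))
    simp only [Finset.card_univ, Fintype.card_fin, nsmul_eq_mul]
  · intro x j y
    rw [sub_le_iff_le_add]
    refine ciSup_le fun i => ?_
    have h1 := le_ciSup (Set.finite_range fun i => ∑ r, (∫ z, f (inner ℝ (w i) (Z z)) ∂μ -
        f (inner ℝ (w i) (Z (x r))))).bddAbove i
    refine le_trans ?_ (add_le_add le_rfl h1)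
    rw [← sub_le_iff_le_add, ← Finset.sum_sub_distrib, Finset.sum_eq_single j]
    · rw [Function.update_self]
      linarith [hf0 (inner ℝ (w i) (Z y)), hfB (inner ℝ (w i) (Z (x j)))]
    · intro r _ hr
      rw [Function.update_of_ne hr, sub_self]
    · simp

theorem measure_deviation_le {Ω E : Type*} [MeasurableSpace Ω] (μ : Measure Ω)
    [IsProbabilityMeasure μ] [NormedAddCommGroup E]
    [InnerProductSpace ℝ E] [SecondCountableTopology E] {Z : Ω → E}
    (hZm : ∀ w, Measurable fun ω => inner ℝ w (Z ω)) (hZ : ∀ ω, ‖Z ω‖ ≤ 1)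
    {f : ℝ → ℝ} {L B : ℝ} (hL : 0 ≤ L) (hB0 : 0 < B) (hf : ∀ x y, |f x - f y| ≤ L * |x - y|)
    (hfm : Measurable f) (hf0 : ∀ x, 0 ≤ f x) (hfB : ∀ x, f x ≤ B) {n : ℕ} (hn : 1 ≤ n)
    {δ : ℝ} (hδ : 0 < δ) (hδ1 : δ ≤ 1) :
    (Measure.pi fun _ : Fin n => μ) {S | ∃ w : E, ‖w‖ ≤ 1 ∧
      2 * L * √n + B * √(n * Real.log (1 / δ) / 2) <
      ∑ r, (∫ z, f (inner ℝ w (Z z)) ∂μ - f (inner ℝ w (Z (S r))))} ≤ ENNReal.ofReal δ := by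
  set t := 2 * L * √n + B * √(n * Real.log (1 / δ) / 2) with ht
  have : Nonempty {w : E // ‖w‖ ≤ 1} := ⟨⟨0, by simp⟩⟩
  set q : ℕ → {w : E // ‖w‖ ≤ 1} := TopologicalSpace.denseSeq _ with hq
  set dev : {w : E // ‖w‖ ≤ 1} → (Fin n → Ω) → ℝ := fun w S =>
    ∑ r, (∫ z, f (inner ℝ w.1 (Z z)) ∂μ - f (inner ℝ w.1 (Z (S r)))) with hdev
  have hB : ∀ x, |f x| ≤ B := fun x => abs_le.2 ⟨by linarith [hf0 x], hfB x⟩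
  have hfc : Continuous f := by
    have : LipschitzWith L.toNNReal f := LipschitzWith.of_dist_le_mul fun x y => by
      rw [Real.coe_toNNReal L hL]; exact hf x y
    exact this.continuous
  have hcont : ∀ S, Continuous fun w => dev w S := fun S => by
    refine continuous_finsetSum _ fun r _ => Continuous.sub ?_ (by fun_prop)
    refine continuous_of_dominated (bound := fun _ => B)
      (fun w => (hfm.comp (hZm w.1)).aestronglyMeasurable)
      (fun w => Filter.Eventually.of_forall fun z => hB _) (integrable_const _)
      (Filter.Eventually.of_forall fun z => by fun_prop)
  set bad : ℕ → Set (Fin n → Ω) := fun N => {S | ∃ i ≤ N, t < dev (q i) S} with hbad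
  have hmono : Monotone bad := by
    rintro N M hNM S ⟨i, hi, h⟩
    exact ⟨i, hi.trans hNM, h⟩
  have hsub : {S | ∃ w : E, ‖w‖ ≤ 1 ∧ t <
      ∑ r, (∫ z, f (inner ℝ w (Z z)) ∂μ - f (inner ℝ w (Z (S r))))} ⊆ ⋃ N, bad N := by
    rintro S ⟨w, hw, hS⟩
    obtain ⟨i, hmem⟩ := (TopologicalSpace.denseRange_denseSeq
      {w : E // ‖w‖ ≤ 1}).exists_mem_open (isOpen_lt continuous_const (hcont S)) ⟨⟨w, hw⟩, hS⟩
    exact Set.mem_iUnion.2 ⟨i, i, le_rfl, hmem⟩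
  refine (measure_mono hsub).trans ?_
  rw [hmono.measure_iUnion]
  refine iSup_le fun N => ?_
  have h := measureReal_iSup_deviation_le μ (ι := Fin (N + 1)) (w := fun i => (q i).1)
    (fun i => (q i).2) (fun i => hZm _) hZ hL hB0 hf hfm hf0 hfB hn hδ hδ1
  replace h := (ENNReal.le_ofReal_iff_toReal_le (measure_ne_top _ _) hδ.le).2 h
  refine (measure_mono ?_).trans h
  rintro S ⟨i, hi, hS⟩
  exact hS.trans_le (le_ciSup (f := fun i : Fin (N + 1) => dev (q i) S)
    (Set.finite_range _).bddAbove ⟨i, Nat.lt_succ_of_le hi⟩)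

/-- Two-sided uniform convergence of empirical means for a Lipschitz function of a linear
functional. -/
theorem measure_abs_deviation_le {Ω E : Type*} [MeasurableSpace Ω] (μ : Measure Ω)
    [IsProbabilityMeasure μ] [NormedAddCommGroup E]
    [InnerProductSpace ℝ E] [SecondCountableTopology E] {Z : Ω → E}
    (hZm : ∀ w, Measurable fun ω => inner ℝ w (Z ω)) (hZ : ∀ ω, ‖Z ω‖ ≤ 1)
    {f : ℝ → ℝ} {L B : ℝ} (hL : 0 ≤ L) (hB0 : 0 < B) (hf : ∀ x y, |f x - f y| ≤ L * |x - y|)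
    (hf0 : ∀ x, 0 ≤ f x) (hfB : ∀ x, f x ≤ B) {n : ℕ} (hn : 1 ≤ n)
    {δ : ℝ} (hδ : 0 < δ) (hδ1 : δ ≤ 1) :
    (Measure.pi fun _ : Fin n => μ) {S | ∃ w : E, ‖w‖ ≤ 1 ∧
      2 * L / √n + B * √(Real.log (1 / δ) / (2 * n)) <
      |∫ z, f (inner ℝ w (Z z)) ∂μ - (∑ r, f (inner ℝ w (Z (S r)))) / n|} ≤
      ENNReal.ofReal (2 * δ) := by
  have hn0 : (0 : ℝ) < n := by exact_mod_cast hn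
  have hfm : Measurable f := by
    have : LipschitzWith L.toNNReal f := LipschitzWith.of_dist_le_mul fun x y => by
      rw [Real.coe_toNNReal L hL]; exact hf x y
    exact this.continuous.measurable
  have hB : ∀ x, |f x| ≤ B := fun x => abs_le.2 ⟨by linarith [hf0 x], hfB x⟩
  have h1 := measure_deviation_le μ hZm hZ hL hB0 hf hfm hf0 hfB hn hδ hδ1
  have h2 := measure_deviation_le μ hZm hZ (f := fun x => B - f x) hL hB0
    (fun x y => by rw [sub_sub_sub_cancel_left, abs_sub_comm]; exact hf x y)
    (measurable_const.sub hfm) (fun x => by linarith [hfB x]) (fun x => by linarith [hf0 x])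
    hn hδ hδ1
  rw [two_mul δ, ENNReal.ofReal_add hδ.le hδ.le]
  refine (measure_mono ?_).trans ((measure_union_le _ _).trans (add_le_add h1 h2))
  rintro S ⟨w, hw, hS⟩
  have hi : ∫ z, (B - f (inner ℝ w (Z z))) ∂μ = B - ∫ z, f (inner ℝ w (Z z)) ∂μ := by
    have hI : Integrable (fun z => f (inner ℝ w (Z z))) μ :=
      integrable_of_measurable_of_bounded (hfm.comp (hZm w)) fun z => hB _
    rw [integral_sub (integrable_const _) hI]
    simp
  have e1 : ∑ r, (∫ z, f (inner ℝ w (Z z)) ∂μ - f (inner ℝ w (Z (S r)))) =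
      n * (∫ z, f (inner ℝ w (Z z)) ∂μ - (∑ r, f (inner ℝ w (Z (S r)))) / n) := by
    rw [Finset.sum_sub_distrib, mul_sub, mul_div_cancel₀ _ hn0.ne']
    simp
  have e2 : ∑ r, (∫ z, (B - f (inner ℝ w (Z z))) ∂μ - (B - f (inner ℝ w (Z (S r))))) =
      n * -(∫ z, f (inner ℝ w (Z z)) ∂μ - (∑ r, f (inner ℝ w (Z (S r)))) / n) := by
    rw [hi, mul_neg, ← e1, ← Finset.sum_neg_distrib]
    exact Finset.sum_congr rfl fun r _ => by ring
  have e3 : 2 * L * √n + B * √(n * Real.log (1 / δ) / 2) =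
      n * (2 * L / √n + B * √(Real.log (1 / δ) / (2 * n))) := by
    have : √(n * Real.log (1 / δ) / 2) = n * √(Real.log (1 / δ) / (2 * n)) := by
      rw [show (n : ℝ) * Real.log (1 / δ) / 2 = n ^ 2 * (Real.log (1 / δ) / (2 * n)) by
        field_simp, Real.sqrt_mul (by positivity), Real.sqrt_sq hn0.le]
    rw [this, mul_add, mul_div_assoc', mul_comm (n : ℝ) (2 * L), mul_div_assoc, Real.div_sqrt]
    ring
  rcases lt_abs.1 hS with h | h
  · exact Or.inl ⟨w, hw, by rw [e1, e3]; exact mul_lt_mul_of_pos_left h hn0⟩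
  · exact Or.inr ⟨w, hw, by rw [e2, e3]; exact mul_lt_mul_of_pos_left h hn0⟩

/-- The upper tail of the standard normal distribution. -/
def normalTail (u : ℝ) : ℝ := (gaussianReal 0 1).real (Set.Ioi u)

theorem normalTail_nonneg (u : ℝ) : 0 ≤ normalTail u := measureReal_nonneg

theorem normalTail_le_one (u : ℝ) : normalTail u ≤ 1 := measureReal_le_one

theorem normalTail_le_exp {u : ℝ} (hu : 0 ≤ u) : normalTail u ≤ Real.exp (-(u ^ 2 / 2)) := by
  have h := measure_ge_le_exp_mul_mgf (μ := gaussianReal 0 1) (X := id) u hu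
    (by simpa using integrable_exp_mul_gaussianReal (μ := 0) (v := 1) u)
  refine (measureReal_mono (fun x (hx : u < x) => hx.le)).trans (h.trans (le_of_eq ?_))
  rw [mgf_id_gaussianReal, ← Real.exp_add]
  congr 1
  simp
  ring

theorem one_sub_normalTail_le_exp {u : ℝ} (hu : u ≤ 0) :
    1 - normalTail u ≤ Real.exp (-(u ^ 2 / 2)) := by
  have h := measure_le_le_exp_mul_mgf (μ := gaussianReal 0 1) (X := id) u hu
    (by simpa using integrable_exp_mul_gaussianReal (μ := 0) (v := 1) u)
  have hc : 1 - normalTail u = (gaussianReal 0 1).real (Set.Iic u) := by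
    rw [normalTail, ← Set.compl_Iic, probReal_compl_eq_one_sub measurableSet_Iic]
    ring
  rw [hc]
  refine (h.trans (le_of_eq ?_))
  rw [mgf_id_gaussianReal, ← Real.exp_add]
  congr 1
  simp
  ring

theorem abs_normalTail_sub_le {u v m : ℝ} (hm : 0 ≤ m)
    (h : ∀ x ∈ Set.uIcc u v, m ≤ |x|) :
    |normalTail u - normalTail v| ≤ Real.exp (-(m ^ 2 / 2)) * |u - v| := by
  wlog huv : u ≤ v generalizing u v
  · rw [abs_sub_comm, abs_sub_comm u v]
    exact this (by rwa [Set.uIcc_comm]) (le_of_not_ge huv)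
  rw [Set.uIcc_of_le huv] at h
  have e : normalTail u - normalTail v = (gaussianReal 0 1).real (Set.Ioc u v) := by
    rw [normalTail, normalTail, ← Set.Ioc_union_Ioi_eq_Ioi huv,
      measureReal_union (Set.Ioc_disjoint_Ioi le_rfl) measurableSet_Ioi]
    ring
  have hpdf : ∀ x ∈ Set.Ioc u v, gaussianPDFReal 0 1 x ≤ Real.exp (-(m ^ 2 / 2)) := fun x hx => by
    rw [gaussianPDFReal_def]
    have h1 : (√(2 * Real.pi * (1 : NNReal)))⁻¹ ≤ 1 := by
      refine inv_le_one_of_one_le₀ (Real.one_le_sqrt.2 ?_)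
      simp only [NNReal.coe_one]
      linarith [Real.pi_gt_three]
    have h2 : m ^ 2 ≤ x ^ 2 := by
      rw [← sq_abs x]
      exact pow_le_pow_left₀ hm (h x ⟨hx.1.le, hx.2⟩) 2
    calc _ ≤ 1 * Real.exp (-(x - 0) ^ 2 / (2 * (1 : NNReal))) :=
          mul_le_mul_of_nonneg_right h1 (Real.exp_pos _).le
      _ ≤ _ := by
          rw [one_mul]
          refine Real.exp_le_exp.2 ?_
          simp only [NNReal.coe_one]
          linarith
  rw [e, abs_of_nonneg measureReal_nonneg, abs_of_nonpos (by linarith), measureReal_def,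
    gaussianReal_apply_eq_integral 0 one_ne_zero, ENNReal.toReal_ofReal
      (integral_nonneg fun x => gaussianPDFReal_nonneg _ _ _)]
  refine (setIntegral_mono_on (integrable_gaussianPDFReal 0 1).integrableOn
    (integrable_const (Real.exp (-(m ^ 2 / 2)))) measurableSet_Ioc hpdf).trans (le_of_eq ?_)
  simp [huv]
  ring

theorem pi_gaussianReal_map_sum {k : ℕ} (v : NNReal) (h : Fin k → ℝ)
    (hh : (∑ r, h r ^ 2) * v = 1) :
    (Measure.pi fun _ : Fin k => gaussianReal 0 v).map (fun b => ∑ r, h r * b r) =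
      gaussianReal 0 1 := by
  set P := Measure.pi fun _ : Fin k => gaussianReal 0 v with hP
  have hlaw : ∀ r, P.map (fun b => b r) = gaussianReal 0 v := fun r =>
    (measurePreserving_eval (fun _ : Fin k => gaussianReal 0 v) r).map_eq
  have hX : ∀ r, HasGaussianLaw (fun b : Fin k → ℝ => h r * b r) P := fun r => by
    have : HasLaw (fun b : Fin k → ℝ => b r) (gaussianReal 0 v) P :=
      ⟨(measurable_pi_apply r).aemeasurable, hlaw r⟩
    exact (gaussianReal_const_mul this (h r)).hasGaussianLaw
  have hind : iIndepFun (fun r (b : Fin k → ℝ) => h r * b r) P :=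
    iIndepFun_pi (X := fun r x => h r * x) fun r => by fun_prop
  have hsum : HasGaussianLaw (fun b : Fin k → ℝ => ∑ r, h r * b r) P :=
    hind.hasGaussianLaw_fun_sum hX
  have hLp : ∀ r, MemLp (fun b : Fin k → ℝ => h r * b r) 2 P := fun r => (hX r).memLp_two
  rw [hsum.map_eq_gaussianReal]
  have hmean : ∫ b, ∑ r, h r * b r ∂P = 0 := by
    rw [integral_finsetSum _ fun r _ => (hX r).integrable]
    refine Finset.sum_eq_zero fun r _ => ?_
    rw [integral_const_mul]
    have : ∫ b, b r ∂P = ∫ x, x ∂(P.map fun b => b r) :=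
      (integral_map (φ := fun b : Fin k → ℝ => b r) (measurable_pi_apply r).aemeasurable
        measurable_id.aestronglyMeasurable).symm
    rw [this, hlaw r, integral_id_gaussianReal, mul_zero]
  have hvar : Var[fun b => ∑ r, h r * b r; P] = 1 := by
    have e : (fun b : Fin k → ℝ => ∑ r, h r * b r) = ∑ r, fun b => h r * b r := by
      ext b; simp
    rw [e, IndepFun.variance_sum (fun r _ => hLp r)
      fun i _ j _ hij => hind.indepFun hij, ← hh, Finset.sum_mul]
    refine Finset.sum_congr rfl fun r _ => ?_
    rw [variance_const_mul]
    have : Var[fun b : Fin k → ℝ => b r; P] = v := by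
      rw [← variance_id_gaussianReal (μ := 0) (v := v), ← hlaw r,
        variance_map aemeasurable_id (measurable_pi_apply r).aemeasurable]
      rfl
    rw [this]
  simp [hmean, hvar]

theorem pi_gaussianReal_real_lt {k : ℕ} (hk : 0 < k) (h : Fin k → ℝ) {s β : ℝ} (hs : 0 < s)
    (hβ : 0 < β) (hh : ∑ r, h r ^ 2 = s ^ 2) (c : ℝ) :
    (Measure.pi fun _ : Fin k => gaussianReal 0 (k : NNReal)⁻¹).real
      {b | c < β * ∑ r, h r * b r} = normalTail (√k * c / (β * s)) := by
  have hk0 : (0 : ℝ) < k := by exact_mod_cast hk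
  have hsk : √(k : ℝ) ^ 2 = k := Real.sq_sqrt hk0.le
  have hsk0 : 0 < √(k : ℝ) := Real.sqrt_pos.2 hk0
  have hmap := pi_gaussianReal_map_sum (k := k) (k : NNReal)⁻¹ (fun r => √k / s * h r) (by
    simp_rw [mul_pow]
    rw [← Finset.mul_sum, hh, div_pow, hsk]
    push_cast
    field_simp)
  rw [normalTail, ← hmap, measureReal_def, measureReal_def,
    Measure.map_apply (by fun_prop) measurableSet_Ioi]
  congr 2
  ext b
  simp only [Set.mem_ofPred_eq, Set.mem_preimage, Set.mem_Ioi]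
  simp_rw [mul_assoc]
  rw [← Finset.mul_sum, div_lt_iff₀ (by positivity),
    show √(k : ℝ) / s * (∑ r, h r * b r) * (β * s) = √k * (β * ∑ r, h r * b r) by field_simp]
  exact (mul_lt_mul_iff_right₀ hsk0).symm

theorem map_two_columns {k m : ℕ} (N : Measure ℝ) [IsProbabilityMeasure N] {i j : Fin m}
    (hij : i ≠ j) :
    (Measure.pi fun _ : Fin k => Measure.pi fun _ : Fin m => N).map
      (fun A => ((fun r => A r i), fun r => A r j)) =
      (Measure.pi fun _ : Fin k => N).prod (Measure.pi fun _ : Fin k => N) := by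
  have hrow : (Measure.pi fun _ : Fin m => N).map (fun a => (a i, a j)) = N.prod N := by
    have hind : iIndepFun (fun r (b : Fin m → ℝ) => b r) (Measure.pi fun _ => N) :=
      iIndepFun_pi (X := fun _ x => x) fun r => aemeasurable_id
    have h := (hind.indepFun hij).map_prod_eq_prod_map_map
      (measurable_pi_apply i).aemeasurable (measurable_pi_apply j).aemeasurable
    rw [h, (measurePreserving_eval (fun _ : Fin m => N) i).map_eq,
      (measurePreserving_eval (fun _ : Fin m => N) j).map_eq]
  have h1 := Measure.pi_map_pi (μ := fun _ : Fin k => Measure.pi fun _ : Fin m => N)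
    (f := fun _ a => (a i, a j)) fun _ => by fun_prop
  simp only [hrow] at h1
  rw [← (measurePreserving_arrowProdEquivProdArrow ℝ ℝ (Fin k) (fun _ => N) fun _ => N).map_eq,
    ← h1, Measure.map_map (MeasurableEquiv.measurable _) (by fun_prop)]
  rfl

theorem integral_exp_mul_sq_gaussianReal {k : ℕ} (hk : 0 < k) {η : ℝ} (hη : η < 1 / 2) :
    ∫ x, Real.exp (η * k * x ^ 2) ∂(gaussianReal 0 (k : NNReal)⁻¹) = (√(1 - 2 * η))⁻¹ := by
  have hk0 : (0 : ℝ) < k := by exact_mod_cast hk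
  rw [integral_gaussianReal_eq_integral_smul (by positivity)]
  have e : ∀ x, gaussianPDFReal 0 (k : NNReal)⁻¹ x • Real.exp (η * k * x ^ 2) =
      (√(2 * Real.pi / k))⁻¹ * Real.exp (-(k * (1 / 2 - η)) * x ^ 2) := fun x => by
    rw [gaussianPDFReal_def, smul_eq_mul, mul_assoc, ← Real.exp_add]
    push_cast
    rw [← div_eq_mul_inv]
    congr 2
    field_simp
    ring
  simp_rw [e]
  rw [integral_const_mul, integral_gaussian, ← Real.sqrt_inv, ← Real.sqrt_inv,
    ← Real.sqrt_mul (by positivity)]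
  congr 1
  have : 1 - 2 * η ≠ 0 := by linarith
  have : 1 / 2 - η ≠ 0 := by linarith
  field_simp

theorem integral_exp_mul_sum_sq {k : ℕ} (hk : 0 < k) {η : ℝ} (hη : η < 1 / 2) :
    ∫ a, Real.exp (η * k * ∑ r, a r ^ 2)
      ∂(Measure.pi fun _ : Fin k => gaussianReal 0 (k : NNReal)⁻¹) = (√(1 - 2 * η))⁻¹ ^ k := by
  simp_rw [Finset.mul_sum, Real.exp_sum]
  rw [integral_fintype_prod_eq_prod (f := fun _ x => Real.exp (η * k * x ^ 2))]
  simp [integral_exp_mul_sq_gaussianReal hk hη]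

theorem integrable_exp_mul_sum_sq {k : ℕ} (hk : 0 < k) {η : ℝ} (hη : η < 1 / 2) :
    Integrable (fun a => Real.exp (η * k * ∑ r, a r ^ 2))
      (Measure.pi fun _ : Fin k => gaussianReal 0 (k : NNReal)⁻¹) := by
  refine Integrable.of_integral_ne_zero ?_
  rw [integral_exp_mul_sum_sq hk hη]
  have : 0 < 1 - 2 * η := by linarith
  positivity

theorem abs_sqrt_one_sub_sq_sub_le {α β : ℝ} (hα : |α| ≤ 1 / 2) (hβ : |β| ≤ 1 / 2) :
    |√(1 - α ^ 2) - √(1 - β ^ 2)| ≤ 5 / 8 * |α - β| := by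
  have h (x : ℝ) (hx : |x| ≤ 1 / 2) : 17 / 20 ≤ √(1 - x ^ 2) := by
    refine Real.le_sqrt_of_sq_le ?_
    rw [← sq_abs x]
    nlinarith [abs_nonneg x]
  have h' (x : ℝ) (hx : |x| ≤ 1 / 2) : √(1 - x ^ 2) ^ 2 = 1 - x ^ 2 := by
    refine Real.sq_sqrt ?_
    rw [← sq_abs x]
    nlinarith [abs_nonneg x]
  set b := √(1 - α ^ 2)
  set c := √(1 - β ^ 2)
  have hb := h α hα
  have hc := h β hβ
  have e : (b - c) * (b + c) = (β + α) * (β - α) := by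
    linear_combination h' α hα - h' β hβ
  have e1 : |b - c| * (b + c) = |β + α| * |α - β| := by
    rw [abs_sub_comm α β, ← abs_mul, ← e, abs_mul, abs_of_nonneg (a := b + c) (by linarith)]
  have h1 : |β + α| ≤ 1 := (abs_add_le _ _).trans (by linarith)
  have h2 := mul_le_mul_of_nonneg_right h1 (abs_nonneg (α - β))
  have h3 := mul_le_mul_of_nonneg_left (show 17 / 10 ≤ b + c by linarith) (abs_nonneg (b - c))
  linarith [abs_nonneg (α - β)]

theorem abs_inv_sqrt_one_sub_sq_sub_le {α β : ℝ} (hα : |α| ≤ 1 / 2) (hβ : |β| ≤ 1 / 2) :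
    |(√(1 - α ^ 2))⁻¹ - (√(1 - β ^ 2))⁻¹| ≤ |α - β| ∧
      |α * (√(1 - α ^ 2))⁻¹ - β * (√(1 - β ^ 2))⁻¹| ≤ 2 * |α - β| := by
  have h (x : ℝ) (hx : |x| ≤ 1 / 2) : 17 / 20 ≤ √(1 - x ^ 2) ∧ √(1 - x ^ 2) ≤ 1 := by
    refine ⟨Real.le_sqrt_of_sq_le ?_, Real.sqrt_le_one.2 (by nlinarith [sq_nonneg x])⟩
    rw [← sq_abs x]
    nlinarith [abs_nonneg x]
  have hd := abs_sqrt_one_sub_sq_sub_le hα hβ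
  obtain ⟨hb, hb1⟩ := h α hα
  obtain ⟨hc, hc1⟩ := h β hβ
  set b := √(1 - α ^ 2)
  set c := √(1 - β ^ 2)
  have hbc : 289 / 400 ≤ b * c := by nlinarith
  have hb0 : 0 < b := by linarith
  have hc0 : 0 < c := by linarith
  have hn := abs_nonneg (α - β)
  constructor
  · rw [inv_sub_inv hb0.ne' hc0.ne', abs_div, abs_of_pos (mul_pos hb0 hc0),
      div_le_iff₀ (by positivity), abs_sub_comm]
    nlinarith
  · rw [← div_eq_mul_inv, ← div_eq_mul_inv, div_sub_div _ _ hb0.ne' hc0.ne', abs_div,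
      abs_of_pos (mul_pos hb0 hc0), div_le_iff₀ (by positivity),
      show α * c - b * β = (α - β) * c - β * (b - c) by ring]
    have h1 : |(α - β) * c| ≤ |α - β| := by
      rw [abs_mul, abs_of_pos hc0]
      exact mul_le_of_le_one_right hn hc1
    have h2 : |β * (b - c)| ≤ 1 / 2 * (5 / 8 * |α - β|) := by
      rw [abs_mul]
      gcongr
    nlinarith [abs_sub ((α - β) * c) (β * (b - c))]

/-- The normalised threshold that the second Gaussian column has to exceed for the rounded
margin to exceed `γ / 2`, when the true margin is `α`, the rounded first column has norm `s` and
its inner product with the first column is `q`. -/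
def marginThreshold (k : ℕ) (γ q s α : ℝ) : ℝ :=
  √k * (γ / 2 - α * q) / (√(1 - α ^ 2) * s)

theorem abs_marginThreshold_sub_le {k : ℕ} {γ q s A α β : ℝ} (hγ : 0 ≤ γ) (hγ1 : γ ≤ 1)
    (hs : 1 / 20 ≤ s) (hq : |q| ≤ s * A) (hα : |α| ≤ 1 / 2) (hβ : |β| ≤ 1 / 2) :
    |marginThreshold k γ q s α - marginThreshold k γ q s β| ≤ √k * (10 + 4 * A) * |α - β| := by
  obtain ⟨h1, h2⟩ := abs_inv_sqrt_one_sub_sq_sub_le hα hβ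
  have e (x : ℝ) : marginThreshold k γ q s x =
      √k * s⁻¹ * (γ / 2 * (√(1 - x ^ 2))⁻¹ - q * (x * (√(1 - x ^ 2))⁻¹)) := by
    rw [marginThreshold, div_eq_mul_inv, mul_inv]
    ring
  have hs0 : 0 < s := by linarith
  rw [e, e, ← mul_sub, abs_mul, abs_of_nonneg (a := √k * s⁻¹) (by positivity), mul_assoc,
    mul_assoc]
  refine mul_le_mul_of_nonneg_left ?_ (Real.sqrt_nonneg _)
  rw [inv_mul_le_iff₀ hs0]
  set F := (√(1 - α ^ 2))⁻¹
  set G := (√(1 - β ^ 2))⁻¹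
  rw [show γ / 2 * F - q * (α * F) - (γ / 2 * G - q * (β * G)) =
    γ / 2 * (F - G) - q * (α * F - β * G) by ring]
  refine (abs_sub _ _).trans ?_
  rw [abs_mul, abs_mul, abs_of_nonneg (a := γ / 2) (by linarith)]
  have h3 : γ / 2 * |F - G| ≤ 1 / 2 * |α - β| := by gcongr
  have h4 : |q| * |α * F - β * G| ≤ s * A * (2 * |α - β|) :=
    mul_le_mul hq h2 (abs_nonneg _) ((abs_nonneg _).trans hq)
  have h5 := abs_nonneg (α - β)
  have h6 : 0 ≤ s * A := (abs_nonneg _).trans hq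
  nlinarith [mul_nonneg h6 h5]

theorem le_marginThreshold {k : ℕ} {γ q s α : ℝ} (hγ : 0 ≤ γ) (hq : 0 ≤ q) (hs : 0 < s)
    (hs2 : s ≤ 21 / 10) (hα : -(1 / 2) ≤ α) (hα0 : α ≤ 0) :
    √k * γ / 40 ≤ marginThreshold k γ q s α := by
  have hb : √(1 - α ^ 2) ≤ 1 := Real.sqrt_le_one.2 (by nlinarith [sq_nonneg α])
  have hb0 : 0 < √(1 - α ^ 2) := Real.sqrt_pos.2 (by nlinarith)
  rw [marginThreshold, le_div_iff₀ (by positivity), mul_div_assoc, mul_assoc]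
  refine mul_le_mul_of_nonneg_left ?_ (Real.sqrt_nonneg _)
  have h1 : √(1 - α ^ 2) * s ≤ 1 * (21 / 10) := by gcongr
  have h2 : γ / 40 * (√(1 - α ^ 2) * s) ≤ γ / 40 * (1 * (21 / 10)) := by gcongr
  nlinarith [mul_nonpos_of_nonpos_of_nonneg hα0 hq]

theorem marginThreshold_le {k : ℕ} {γ q s α : ℝ} (hγ : 0 ≤ γ) (hq : 14 / 25 ≤ q) (hs : 0 < s)
    (hs2 : s ≤ 21 / 10) (hα : α ≤ 1 / 2) (hαγ : γ ≤ α) :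
    marginThreshold k γ q s α ≤ -(√k * γ / 40) := by
  have hb : √(1 - α ^ 2) ≤ 1 := Real.sqrt_le_one.2 (by nlinarith [sq_nonneg α])
  have hb0 : 0 < √(1 - α ^ 2) := Real.sqrt_pos.2 (by nlinarith)
  rw [marginThreshold, div_le_iff₀ (by positivity), mul_div_assoc, ← mul_neg, mul_assoc]
  refine mul_le_mul_of_nonneg_left ?_ (Real.sqrt_nonneg _)
  have h1 : √(1 - α ^ 2) * s ≤ 1 * (21 / 10) := by gcongr
  have h2 : γ / 40 * (√(1 - α ^ 2) * s) ≤ γ / 40 * (1 * (21 / 10)) := by gcongr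
  have hα0 : 0 ≤ α := hγ.trans hαγ
  have h3 : γ * (14 / 25) ≤ α * q := by gcongr
  nlinarith

/-- Exponential weight dominating the event that a Gaussian column has atypical norm. -/
def atypicalWeight (k : ℕ) (S : ℝ) : ℝ :=
  Real.exp (4 / 25 * k) * Real.exp (-1 / 4 * k * S) + Real.exp (-k) * Real.exp (3 / 8 * k * S)

theorem atypicalWeight_nonneg (k : ℕ) (S : ℝ) : 0 ≤ atypicalWeight k S := by
  unfold atypicalWeight
  positivity

theorem le_atypicalWeight {k : ℕ} (hk : 4 ≤ k) {A : ℝ} (hA : 0 ≤ A)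
    (h : ¬ (4 / 5 ≤ A ∧ A ≤ 2)) :
    1 ≤ atypicalWeight k (A ^ 2) ∧ 10 + 4 * A ≤ 18 * atypicalWeight k (A ^ 2) := by
  have hk' : (4 : ℝ) ≤ k := by exact_mod_cast hk
  rw [atypicalWeight, ← Real.exp_add, ← Real.exp_add]
  set x := Real.exp (4 / 25 * k + -1 / 4 * k * A ^ 2)
  set y := Real.exp (-k + 3 / 8 * k * A ^ 2)
  have hx : 0 < x := Real.exp_pos _
  have hy : 0 < y := Real.exp_pos _
  by_cases hA1 : 4 / 5 ≤ A
  · have hA2 : 2 < A := lt_of_not_ge fun h' => h ⟨hA1, h'⟩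
    have : 1 + A ^ 2 / 2 ≤ y := by
      refine le_trans ?_ (Real.add_one_le_exp _)
      nlinarith [mul_nonneg (sub_nonneg.2 hk') (sub_nonneg.2 (show 4 ≤ A ^ 2 by nlinarith))]
    constructor <;> nlinarith
  · have : 1 ≤ x := by
      refine Real.one_le_exp ?_
      nlinarith [mul_nonneg (show (0 : ℝ) ≤ k by linarith)
        (sub_nonneg.2 (show A ^ 2 ≤ 16 / 25 by nlinarith))]
    constructor <;> nlinarith

theorem abs_normalTail_marginThreshold_sub_le {k : ℕ} (hk : 4 ≤ k) {γ q s A α β : ℝ}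
    (hγ : 0 ≤ γ) (hγ1 : γ ≤ 1) (hA : 0 ≤ A) (hs : 1 / 20 ≤ s) (hsA : s ≤ A + 1 / 10)
    (hq : |q| ≤ s * A) (hqA : A ^ 2 - A / 10 ≤ q)
    (hαβ : (α ∈ Set.Icc (-(1 / 2)) 0 ∧ β ∈ Set.Icc (-(1 / 2)) 0) ∨
      (α ∈ Set.Icc γ (1 / 2) ∧ β ∈ Set.Icc γ (1 / 2))) :
    |normalTail (marginThreshold k γ q s α) - normalTail (marginThreshold k γ q s β)| ≤
      √k * |α - β| * (18 * Real.exp (-(k * γ ^ 2 / 3200)) + 18 * atypicalWeight k (A ^ 2)) := by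
  have hs0 : 0 < s := by linarith
  have hα : |α| ≤ 1 / 2 := by
    rcases hαβ with h | h <;> exact abs_le.2 ⟨by linarith [h.1.1], by linarith [h.1.2]⟩
  have hβ : |β| ≤ 1 / 2 := by
    rcases hαβ with h | h <;> exact abs_le.2 ⟨by linarith [h.2.1], by linarith [h.2.2]⟩
  have hL := abs_marginThreshold_sub_le (k := k) hγ hγ1 hs hq hα hβ
  have hW := atypicalWeight_nonneg k (A ^ 2)
  have hd : 0 ≤ √k * |α - β| := by positivity
  by_cases h : 4 / 5 ≤ A ∧ A ≤ 2
  · have hm : 0 ≤ √k * γ / 40 := by positivity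
    have hqq : 14 / 25 ≤ q := by nlinarith
    have key := abs_normalTail_sub_le (u := marginThreshold k γ q s α)
      (v := marginThreshold k γ q s β) hm (by
        intro x hx
        rcases hαβ with h' | h'
        · exact (le_trans (le_inf
            (le_marginThreshold hγ (by linarith) hs0 (by linarith) h'.1.1 h'.1.2)
            (le_marginThreshold hγ (by linarith) hs0 (by linarith) h'.2.1 h'.2.2)) hx.1).trans
            (le_abs_self x)
        · exact (le_neg.2 (hx.2.trans (sup_le
            (marginThreshold_le hγ hqq hs0 (by linarith) h'.1.2 h'.1.1)
            (marginThreshold_le hγ hqq hs0 (by linarith) h'.2.2 h'.2.1)))).trans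
            (neg_le_abs x))
    have e : (√k * γ / 40) ^ 2 / 2 = k * γ ^ 2 / 3200 := by
      rw [div_pow, mul_pow, Real.sq_sqrt (Nat.cast_nonneg k)]
      ring
    rw [e] at key
    set E := Real.exp (-(k * γ ^ 2 / 3200))
    have hE : 0 < E := Real.exp_pos _
    calc _ ≤ E * (√k * (10 + 4 * A) * |α - β|) := key.trans (by gcongr)
      _ = √k * |α - β| * ((10 + 4 * A) * E) := by ring
      _ ≤ _ := mul_le_mul_of_nonneg_left (by nlinarith [h.2]) hd
  · have key := abs_normalTail_sub_le (u := marginThreshold k γ q s α)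
      (v := marginThreshold k γ q s β) le_rfl fun x _ => abs_nonneg x
    simp only [ne_eq, OfNat.ofNat_ne_zero, not_false_eq_true, zero_pow, zero_div, neg_zero,
      Real.exp_zero, one_mul] at key
    calc _ ≤ √k * (10 + 4 * A) * |α - β| := key.trans hL
      _ = √k * |α - β| * (10 + 4 * A) := by ring
      _ ≤ _ := mul_le_mul_of_nonneg_left (by
        linarith [(le_atypicalWeight hk hA h).2, Real.exp_pos (-(k * γ ^ 2 / 3200))]) hd

theorem normalTail_marginThreshold_le {k : ℕ} (hk : 4 ≤ k) {γ q s A α : ℝ}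
    (hγ : 0 ≤ γ) (hA : 0 ≤ A) (hs : 1 / 20 ≤ s) (hsA : s ≤ A + 1 / 10)
    (hqA : A ^ 2 - A / 10 ≤ q) (hα : α ∈ Set.Icc (-(1 / 2)) 0) :
    normalTail (marginThreshold k γ q s α) ≤
      Real.exp (-(k * γ ^ 2 / 3200)) + atypicalWeight k (A ^ 2) := by
  have hW := atypicalWeight_nonneg k (A ^ 2)
  by_cases h : 4 / 5 ≤ A ∧ A ≤ 2
  · have hu := le_marginThreshold (k := k) (q := q) (s := s) hγ (by nlinarith) (by linarith)
      (by linarith) hα.1 hα.2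
    have hm : 0 ≤ √k * γ / 40 := by positivity
    have e : (√k * γ / 40) ^ 2 / 2 = k * γ ^ 2 / 3200 := by
      rw [div_pow, mul_pow, Real.sq_sqrt (Nat.cast_nonneg k)]
      ring
    have h2 : Real.exp (-(marginThreshold k γ q s α ^ 2 / 2)) ≤
        Real.exp (-(k * γ ^ 2 / 3200)) := by
      rw [← e]
      gcongr
    linarith [normalTail_le_exp (hm.trans hu)]
  · linarith [normalTail_le_one (marginThreshold k γ q s α), (le_atypicalWeight hk hA h).1,
      Real.exp_pos (-(k * γ ^ 2 / 3200))]

theorem one_sub_normalTail_marginThreshold_le {k : ℕ} (hk : 4 ≤ k) {γ q s A α : ℝ}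
    (hγ : 0 ≤ γ) (hA : 0 ≤ A) (hs : 1 / 20 ≤ s) (hsA : s ≤ A + 1 / 10)
    (hqA : A ^ 2 - A / 10 ≤ q) (hα : α ∈ Set.Icc γ (1 / 2)) :
    1 - normalTail (marginThreshold k γ q s α) ≤
      Real.exp (-(k * γ ^ 2 / 3200)) + atypicalWeight k (A ^ 2) := by
  have hW := atypicalWeight_nonneg k (A ^ 2)
  by_cases h : 4 / 5 ≤ A ∧ A ≤ 2
  · have hu := marginThreshold_le (k := k) (q := q) (s := s) hγ (by nlinarith) (by linarith)
      (by linarith) hα.2 hα.1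
    have hm : 0 ≤ √k * γ / 40 := by positivity
    have e : (√k * γ / 40) ^ 2 / 2 = k * γ ^ 2 / 3200 := by
      rw [div_pow, mul_pow, Real.sq_sqrt (Nat.cast_nonneg k)]
      ring
    have h2 : Real.exp (-(marginThreshold k γ q s α ^ 2 / 2)) ≤
        Real.exp (-(k * γ ^ 2 / 3200)) := by
      rw [← e, ← neg_sq (marginThreshold k γ q s α)]
      gcongr
      linarith
    linarith [one_sub_normalTail_le_exp (hu.trans (neg_nonpos.2 hm))]
  · linarith [normalTail_nonneg (marginThreshold k γ q s α), (le_atypicalWeight hk hA h).1,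
      Real.exp_pos (-(k * γ ^ 2 / 3200))]

theorem integral_atypicalWeight_le {k : ℕ} (hk : 0 < k) :
    Integrable (fun a => atypicalWeight k (∑ r, a r ^ 2))
      (Measure.pi fun _ : Fin k => gaussianReal 0 (k : NNReal)⁻¹) ∧
    ∫ a, atypicalWeight k (∑ r, a r ^ 2)
      ∂(Measure.pi fun _ : Fin k => gaussianReal 0 (k : NNReal)⁻¹) ≤
      2 * Real.exp (-(k / 50)) := by
  have i1 := (integrable_exp_mul_sum_sq hk (η := -1 / 4) (by norm_num)).const_mul
    (Real.exp (4 / 25 * k))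
  have i2 := (integrable_exp_mul_sum_sq hk (η := 3 / 8) (by norm_num)).const_mul
    (Real.exp (-k))
  refine ⟨i1.add i2, ?_⟩
  simp_rw [atypicalWeight]
  rw [integral_add i1 i2, integral_const_mul, integral_const_mul,
    integral_exp_mul_sum_sq hk (by norm_num), integral_exp_mul_sum_sq hk (by norm_num)]
  have h1 : (√(1 - 2 * (-1 / 4)))⁻¹ ≤ Real.exp (-(9 / 50)) := by
    rw [Real.exp_neg]
    refine inv_anti₀ (Real.exp_pos _) (Real.le_sqrt_of_sq_le ?_)
    have h : Real.exp (9 / 50) ≤ 1 / (1 - 9 / 50) := by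
      rw [le_div_iff₀ (by norm_num)]
      have := mul_le_mul_of_nonneg_left (Real.one_sub_le_exp_neg (9 / 50))
        (Real.exp_pos (9 / 50)).le
      rwa [← Real.exp_add, add_neg_cancel, Real.exp_zero] at this
    calc _ ≤ (1 / (1 - 9 / 50)) ^ 2 := pow_le_pow_left₀ (Real.exp_pos _).le h 2
      _ ≤ (_ : ℝ) := by norm_num
  have h2 : (√(1 - 2 * (3 / 8)))⁻¹ ≤ Real.exp (49 / 50) := by
    have e : √(1 - 2 * (3 / 8) : ℝ) = 1 / 2 := by
      rw [show (1 - 2 * (3 / 8) : ℝ) = (1 / 2) ^ 2 by norm_num]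
      exact Real.sqrt_sq (by norm_num)
    rw [e, show (49 / 50 : ℝ) = 49 / 100 + 49 / 100 by norm_num, Real.exp_add]
    nlinarith [Real.add_one_le_exp (49 / 100 : ℝ)]
  have h1' := pow_le_pow_left₀ (by positivity) h1 k
  have h2' := pow_le_pow_left₀ (by positivity) h2 k
  rw [← Real.exp_nat_mul] at h1' h2'
  have h1'' := mul_le_mul_of_nonneg_left h1' (Real.exp_pos (4 / 25 * k)).le
  have h2'' := mul_le_mul_of_nonneg_left h2' (Real.exp_pos (-(k : ℝ))).le
  rw [← Real.exp_add] at h1'' h2''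
  rw [show 4 / 25 * (k : ℝ) + k * -(9 / 50) = -(k / 50) by ring] at h1''
  rw [show -(k : ℝ) + k * (49 / 50) = -(k / 50) by ring] at h2''
  linarith

theorem gridStep_pos {k : ℕ} (hk : 0 < k) : 0 < gridStep k := by
  have : (0 : ℝ) < k := by exact_mod_cast hk
  unfold gridStep
  positivity

theorem natCast_mul_gridStep_sq {k : ℕ} (hk : 0 < k) : k * gridStep k ^ 2 = 1 / 100 := by
  have h : (0 : ℝ) < k := by exact_mod_cast hk
  rw [gridStep, inv_pow, mul_pow, Real.sq_sqrt h.le]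
  field_simp
  norm_num

theorem measurable_roundDown (k : ℕ) : Measurable (roundDown k) := by
  unfold roundDown
  refine measurable_const.add (Measurable.mul_const ?_ _)
  exact measurable_from_top.comp
    (Int.measurable_floor.comp ((measurable_id.sub_const _).div_const _))

theorem measurable_roundProb (k : ℕ) : Measurable (roundProb k) := by
  have := measurable_roundDown k
  unfold roundProb
  fun_prop

/-- Coordinatewise randomised rounding of a vector. -/
def vecRound (k : ℕ) (a t : Fin k → ℝ) (r : Fin k) : ℝ :=
  if t r ≤ roundProb k (a r) then roundDown k (a r) else roundDown k (a r) + gridStep k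

theorem measurable_vecRound (k : ℕ) (r : Fin k) :
    Measurable fun p : (Fin k → ℝ) × (Fin k → ℝ) => vecRound k p.1 p.2 r := by
  have h1 := measurable_roundDown k
  have h2 := measurable_roundProb k
  unfold vecRound
  exact Measurable.ite (measurableSet_le (by fun_prop) (by fun_prop)) (by fun_prop) (by fun_prop)

theorem abs_vecRound_sub_le {k : ℕ} (hk : 0 < k) (a t : Fin k → ℝ) (r : Fin k) :
    |vecRound k a t r - a r| ≤ gridStep k := by
  have hg := gridStep_pos hk
  have h1 := Int.floor_le ((a r - gridStep k / 2) / gridStep k)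
  have h2 := Int.lt_floor_add_one ((a r - gridStep k / 2) / gridStep k)
  rw [le_div_iff₀ hg] at h1
  rw [div_lt_iff₀ hg] at h2
  unfold vecRound roundDown
  split_ifs <;> rw [abs_le] <;> constructor <;> linarith

theorem half_gridStep_le_abs_vecRound {k : ℕ} (hk : 0 < k) (a t : Fin k → ℝ) (r : Fin k) :
    gridStep k / 2 ≤ |vecRound k a t r| := by
  have hg := gridStep_pos hk
  have key (z : ℤ) : gridStep k / 2 ≤ |gridStep k / 2 + z * gridStep k| := by
    rcases le_or_gt 0 z with hz | hz
    · have : (0 : ℝ) ≤ z := by exact_mod_cast hz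
      exact (by nlinarith : gridStep k / 2 ≤ _).trans (le_abs_self _)
    · have : (z : ℝ) ≤ -1 := by exact_mod_cast (by omega : z ≤ -1)
      exact (by nlinarith : gridStep k / 2 ≤ _).trans (neg_le_abs _)
  unfold vecRound roundDown
  split_ifs
  · exact key _
  · convert key (⌊(a r - gridStep k / 2) / gridStep k⌋ + 1) using 2
    push_cast
    ring

theorem vecRound_bounds {k : ℕ} (hk : 0 < k) (a t : Fin k → ℝ) :
    1 / 20 ≤ √(∑ r, vecRound k a t r ^ 2) ∧
    √(∑ r, vecRound k a t r ^ 2) ≤ √(∑ r, a r ^ 2) + 1 / 10 ∧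
    |∑ r, vecRound k a t r * a r| ≤ √(∑ r, vecRound k a t r ^ 2) * √(∑ r, a r ^ 2) ∧
    √(∑ r, a r ^ 2) ^ 2 - √(∑ r, a r ^ 2) / 10 ≤ ∑ r, vecRound k a t r * a r := by
  have hg := gridStep_pos hk
  have hkg := natCast_mul_gridStep_sq hk
  set h := vecRound k a t
  have hS : 0 ≤ ∑ r, a r ^ 2 := Finset.sum_nonneg fun _ _ => sq_nonneg _
  have hA := Real.sq_sqrt hS
  have hA0 := Real.sqrt_nonneg (∑ r, a r ^ 2)
  set A := √(∑ r, a r ^ 2)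
  have he : ∑ r, (h r - a r) ^ 2 ≤ 1 / 100 := by
    rw [← hkg]
    refine (Finset.sum_le_card_nsmul _ _ (gridStep k ^ 2) fun r _ => ?_).trans (by simp)
    rw [← sq_abs]
    exact pow_le_pow_left₀ (abs_nonneg _) (abs_vecRound_sub_le hk a t r) 2
  have hc : |∑ r, (h r - a r) * a r| ≤ A / 10 := by
    refine abs_le_of_sq_le_sq ?_ (by positivity)
    refine (Finset.sum_mul_sq_le_sq_mul_sq _ _ _).trans ?_
    rw [← hA]
    nlinarith [sq_nonneg A]
  have hQ : ∑ r, h r * a r = A ^ 2 + ∑ r, (h r - a r) * a r := by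
    rw [hA, ← Finset.sum_add_distrib]
    exact Finset.sum_congr rfl fun r _ => by ring
  have hs : ∑ r, h r ^ 2 = A ^ 2 + 2 * (∑ r, (h r - a r) * a r) + ∑ r, (h r - a r) ^ 2 := by
    rw [hA, Finset.mul_sum, ← Finset.sum_add_distrib, ← Finset.sum_add_distrib]
    exact Finset.sum_congr rfl fun r _ => by ring
  refine ⟨?_, ?_, ?_, ?_⟩
  · refine Real.le_sqrt_of_sq_le ?_
    have : ∑ r : Fin k, (gridStep k / 2) ^ 2 ≤ ∑ r, h r ^ 2 :=
      Finset.sum_le_sum fun r _ => by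
        rw [← sq_abs (h r)]
        exact pow_le_pow_left₀ (by positivity) (half_gridStep_le_abs_vecRound hk a t r) 2
    rw [Finset.sum_const, Finset.card_univ, Fintype.card_fin, nsmul_eq_mul] at this
    linarith
  · refine Real.sqrt_le_iff.2 ⟨by positivity, ?_⟩
    rw [hs]
    linarith [le_abs_self (∑ r, (h r - a r) * a r)]
  · refine abs_le_of_sq_le_sq ?_ (by positivity)
    rw [mul_pow, hA, Real.sq_sqrt (Finset.sum_nonneg fun _ _ => sq_nonneg _)]
    exact Finset.sum_mul_sq_le_sq_mul_sq _ _ _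
  · rw [hQ]
    linarith [neg_abs_le (∑ r, (h r - a r) * a r)]

/-- The law of a column of the random matrix together with the rounding thresholds. -/
def columnLaw (k : ℕ) : Measure ((Fin k → ℝ) × (Fin k → ℝ)) :=
  (Measure.pi fun _ : Fin k => gaussianReal 0 (k : NNReal)⁻¹).prod
    (Measure.pi fun _ : Fin k => volume.restrict (Set.Icc (0 : ℝ) 1))

instance isProbabilityMeasure_restrict_Icc :
    IsProbabilityMeasure (volume.restrict (Set.Icc (0 : ℝ) 1)) := ⟨by simp⟩

instance isProbabilityMeasure_columnLaw (k : ℕ) : IsProbabilityMeasure (columnLaw k) := by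
  unfold columnLaw
  infer_instance

instance isProbabilityMeasure_roundMeasure (k m : ℕ) :
    IsProbabilityMeasure (roundMeasure k m) := by
  unfold roundMeasure
  infer_instance

/-- The conditional probability, given the first column and the thresholds, that the rounded
margin exceeds `γ / 2`. -/
def condTail (k : ℕ) (γ α : ℝ) (p : (Fin k → ℝ) × (Fin k → ℝ)) : ℝ :=
  normalTail (marginThreshold k γ (∑ r, vecRound k p.1 p.2 r * p.1 r)
    (√(∑ r, vecRound k p.1 p.2 r ^ 2)) α)

theorem condTail_nonneg (k : ℕ) (γ α : ℝ) (p : (Fin k → ℝ) × (Fin k → ℝ)) :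
    0 ≤ condTail k γ α p := normalTail_nonneg _

theorem condTail_le_one (k : ℕ) (γ α : ℝ) (p : (Fin k → ℝ) × (Fin k → ℝ)) :
    condTail k γ α p ≤ 1 := normalTail_le_one _

theorem measurable_normalTail : Measurable normalTail :=
  Antitone.measurable fun _ _ h => measureReal_mono (Set.Ioi_subset_Ioi h)

theorem measurable_condTail (k : ℕ) (γ α : ℝ) : Measurable (condTail k γ α) := by
  have := measurable_vecRound k
  have := measurable_normalTail
  unfold condTail marginThreshold
  fun_prop

theorem integrable_condTail (k : ℕ) (γ α : ℝ) : Integrable (condTail k γ α) (columnLaw k) :=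
  integrable_of_measurable_of_bounded (measurable_condTail k γ α) (C := 1) fun p =>
    (abs_of_nonneg (condTail_nonneg k γ α p)).trans_le (condTail_le_one k γ α p)

/-- The probability that the rounded margin exceeds `γ / 2` when the true margin is `α`. -/
def marginTail (k : ℕ) (γ α : ℝ) : ℝ := ∫ p, condTail k γ α p ∂(columnLaw k)

theorem integral_typicality_le {k : ℕ} (hk : 0 < k) {E : ℝ} (hE : Real.exp (-(k / 50)) ≤ E)
    {f : (Fin k → ℝ) × (Fin k → ℝ) → ℝ} (hf : Integrable f (columnLaw k)) {b : ℝ} (hb : 0 ≤ b)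
    (h : ∀ p, |f p| ≤ b * (E + atypicalWeight k (√(∑ r, p.1 r ^ 2) ^ 2))) :
    |∫ p, f p ∂(columnLaw k)| ≤ b * (3 * E) := by
  obtain ⟨i, hi⟩ := integral_atypicalWeight_le hk
  simp_rw [fun a : Fin k → ℝ => Real.sq_sqrt
    (Finset.sum_nonneg fun r _ => sq_nonneg (a r) : 0 ≤ ∑ r, a r ^ 2)] at h
  have i' : Integrable (fun p => atypicalWeight k (∑ r, p.1 r ^ 2)) (columnLaw k) :=
    i.comp_fst _
  have e : ∫ p, atypicalWeight k (∑ r, p.1 r ^ 2) ∂(columnLaw k) =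
      ∫ a, atypicalWeight k (∑ r, a r ^ 2)
        ∂(Measure.pi fun _ : Fin k => gaussianReal 0 (k : NNReal)⁻¹) := by
    rw [columnLaw, integral_fun_fst (fun a : Fin k → ℝ => atypicalWeight k (∑ r, a r ^ 2))]
    simp
  calc |∫ p, f p ∂(columnLaw k)| ≤ ∫ p, |f p| ∂(columnLaw k) := abs_integral_le_integral_abs
    _ ≤ ∫ p, b * (E + atypicalWeight k (∑ r, p.1 r ^ 2)) ∂(columnLaw k) :=
      integral_mono hf.abs (((integrable_const E).add i').const_mul b) h
    _ = b * (E + ∫ a, atypicalWeight k (∑ r, a r ^ 2)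
        ∂(Measure.pi fun _ : Fin k => gaussianReal 0 (k : NNReal)⁻¹)) := by
      rw [integral_const_mul, integral_add (integrable_const E) i', e]
      simp
    _ ≤ _ := mul_le_mul_of_nonneg_left (by linarith) hb

theorem exp_neg_div_le {k : ℕ} {γ : ℝ} (hγ : 0 ≤ γ) (hγ1 : γ ≤ 1) :
    Real.exp (-(k / 50)) ≤ Real.exp (-(k * γ ^ 2 / 3200)) := by
  refine Real.exp_le_exp.2 ?_
  have : (k : ℝ) * γ ^ 2 ≤ k * 1 := by
    gcongr
    exact pow_le_one₀ hγ hγ1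
  have hk : (0 : ℝ) ≤ k := Nat.cast_nonneg k
  linarith

theorem abs_marginTail_sub_le {k : ℕ} (hk : 4 ≤ k) {γ α β : ℝ} (hγ : 0 ≤ γ) (hγ1 : γ ≤ 1)
    (hαβ : (α ∈ Set.Icc (-(1 / 2)) 0 ∧ β ∈ Set.Icc (-(1 / 2)) 0) ∨
      (α ∈ Set.Icc γ (1 / 2) ∧ β ∈ Set.Icc γ (1 / 2))) :
    |marginTail k γ α - marginTail k γ β| ≤
      54 * √k * Real.exp (-(k * γ ^ 2 / 3200)) * |α - β| := by
  have hk0 : 0 < k := by omega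
  rw [marginTail, marginTail, ← integral_sub (integrable_condTail k γ α)
    (integrable_condTail k γ β)]
  refine (integral_typicality_le hk0 (exp_neg_div_le hγ hγ1)
    ((integrable_condTail k γ α).sub (integrable_condTail k γ β))
    (b := 18 * √k * |α - β|) (by positivity) fun p => ?_).trans (le_of_eq (by ring))
  obtain ⟨h1, h2, h3, h4⟩ := vecRound_bounds hk0 p.1 p.2
  exact (abs_normalTail_marginThreshold_sub_le hk hγ hγ1 (Real.sqrt_nonneg _) h1 h2 h3 h4
    hαβ).trans (le_of_eq (by ring))

theorem marginTail_nonneg (k : ℕ) (γ α : ℝ) : 0 ≤ marginTail k γ α :=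
  integral_nonneg (condTail_nonneg k γ α)

theorem marginTail_le {k : ℕ} (hk : 4 ≤ k) {γ α : ℝ} (hγ : 0 ≤ γ) (hγ1 : γ ≤ 1)
    (hα : α ∈ Set.Icc (-(1 / 2)) 0) :
    marginTail k γ α ≤ 3 * Real.exp (-(k * γ ^ 2 / 3200)) := by
  have hk0 : 0 < k := by omega
  refine (le_abs_self _).trans ((integral_typicality_le hk0 (exp_neg_div_le hγ hγ1)
    (integrable_condTail k γ α) zero_le_one fun p => ?_).trans (le_of_eq (one_mul _)))
  obtain ⟨h1, h2, h3, h4⟩ := vecRound_bounds hk0 p.1 p.2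
  rw [one_mul, abs_of_nonneg (condTail_nonneg k γ α p)]
  exact normalTail_marginThreshold_le hk hγ (Real.sqrt_nonneg _) h1 h2 h4 hα

theorem one_sub_marginTail_nonneg (k : ℕ) (γ α : ℝ) : 0 ≤ 1 - marginTail k γ α := by
  have := integral_mono (integrable_condTail k γ α) (integrable_const 1)
    (condTail_le_one k γ α)
  simp only [integral_const, probReal_univ, smul_eq_mul, mul_one] at this
  exact sub_nonneg.2 this

theorem one_sub_marginTail_le {k : ℕ} (hk : 4 ≤ k) {γ α : ℝ} (hγ : 0 ≤ γ) (hγ1 : γ ≤ 1)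
    (hα : α ∈ Set.Icc γ (1 / 2)) :
    1 - marginTail k γ α ≤ 3 * Real.exp (-(k * γ ^ 2 / 3200)) := by
  have hk0 : 0 < k := by omega
  have i := integrable_condTail k γ α
  have e : 1 - marginTail k γ α = ∫ p, (1 - condTail k γ α p) ∂(columnLaw k) := by
    rw [integral_sub (integrable_const 1) i, marginTail]
    simp
  rw [e]
  refine (le_abs_self _).trans ((integral_typicality_le hk0 (exp_neg_div_le hγ hγ1)
    ((integrable_const 1).sub i) zero_le_one fun p => ?_).trans (le_of_eq (one_mul _)))
  obtain ⟨h1, h2, h3, h4⟩ := vecRound_bounds hk0 p.1 p.2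
  have h0 : 0 ≤ 1 - condTail k γ α p := sub_nonneg.2 (condTail_le_one k γ α p)
  rw [one_mul, Pi.sub_apply, abs_of_nonneg h0]
  exact one_sub_normalTail_marginThreshold_le hk hγ (Real.sqrt_nonneg _) h1 h2 h4 hα

/-- The unit vector at margin `α` from the first basis vector, in the plane spanned by the first
and the last basis vectors. -/
def marginPoint (d : ℕ) (α : ℝ) : Fin (d + 1) → ℝ :=
  Pi.single 0 α + Pi.single (Fin.last d) √(1 - α ^ 2)

theorem sum_mul_marginPoint {d : ℕ} (v : Fin (d + 1) → ℝ) (α : ℝ) :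
    ∑ s, v s * marginPoint d α s = α * v 0 + √(1 - α ^ 2) * v (Fin.last d) := by
  simp only [marginPoint, Pi.add_apply, mul_add, Finset.sum_add_distrib]
  simp [Pi.single_apply, mul_comm]

theorem roundMeasure_real_marginPoint {d k : ℕ} (hd : 0 < d) (hk : 0 < k) (γ : ℝ) {α : ℝ}
    (hα : |α| ≤ 1 / 2) :
    (roundMeasure k (d + 1)).real {p | γ / 2 < 1 * ∑ r, hRound p.1 p.2 (Pi.single 0 1) r *
      ∑ s, p.1 r s * marginPoint d α s} = marginTail k γ α := by
  have hb : 0 < √(1 - α ^ 2) := by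
    rw [Real.sqrt_pos, ← sq_abs]
    nlinarith [abs_nonneg α]
  set ν := Measure.pi fun _ : Fin k => gaussianReal 0 (k : NNReal)⁻¹ with hν
  set τ := Measure.pi fun _ : Fin k => volume.restrict (Set.Icc (0 : ℝ) 1) with hτ
  set B : Set (((Fin k → ℝ) × (Fin k → ℝ)) × (Fin k → ℝ)) :=
    {q | γ / 2 - α * ∑ r, vecRound k q.1.1 q.2 r * q.1.1 r <
      √(1 - α ^ 2) * ∑ r, vecRound k q.1.1 q.2 r * q.1.2 r} with hB
  have hround (r : Fin k) : Measurable fun q : ((Fin k → ℝ) × (Fin k → ℝ)) × (Fin k → ℝ) =>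
      vecRound k q.1.1 q.2 r :=
    (measurable_vecRound k r).comp (by fun_prop : Measurable fun q :
      ((Fin k → ℝ) × (Fin k → ℝ)) × (Fin k → ℝ) => (q.1.1, q.2))
  have hBm : MeasurableSet B := measurableSet_lt (by fun_prop) (by fun_prop)
  have hij : (0 : Fin (d + 1)) ≠ Fin.last d := by
    simp [Fin.ext_iff]
    omega
  have hT : Measurable fun A : Fin k → Fin (d + 1) → ℝ =>
      ((fun r => A r 0), fun r => A r (Fin.last d)) := by fun_prop
  have hmap : (roundMeasure k (d + 1)).map (Prod.map (fun A : Fin k → Fin (d + 1) → ℝ =>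
      ((fun r => A r 0), fun r => A r (Fin.last d))) id) = (ν.prod ν).prod τ := by
    rw [roundMeasure, ← Measure.map_prod_map _ _ hT measurable_id,
      map_two_columns (gaussianReal 0 (k : NNReal)⁻¹) hij, Measure.map_id]
  have hset : {p : (Fin k → Fin (d + 1) → ℝ) × (Fin k → ℝ) | γ / 2 < 1 *
      ∑ r, hRound p.1 p.2 (Pi.single 0 1) r * ∑ s, p.1 r s * marginPoint d α s} =
      Prod.map (fun A : Fin k → Fin (d + 1) → ℝ =>
        ((fun r => A r 0), fun r => A r (Fin.last d))) id ⁻¹' B := by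
    ext p
    have e (r : Fin k) : matVec p.1 (Pi.single 0 1) r = p.1 r 0 := by
      simp [matVec, Pi.single_apply]
    have e' (r : Fin k) : hRound p.1 p.2 (Pi.single 0 1) r =
        vecRound k (fun r => p.1 r 0) p.2 r := by
      simp only [hRound, vecRound, e]
    simp only [hB, Set.mem_ofPred_eq, Set.mem_preimage, e',
      sum_mul_marginPoint, mul_add, Finset.sum_add_distrib, one_mul, sub_lt_iff_lt_add']
    rw [Finset.mul_sum, Finset.mul_sum]
    refine iff_of_eq (congrArg _ (congrArg₂ _ ?_ ?_)) <;>
      exact Finset.sum_congr rfl fun r _ => by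
        simp only [Prod.map_fst, Prod.map_snd, id]
        ring
  have hsec (a t : Fin k → ℝ) : ν {b | ((a, b), t) ∈ B} =
      ENNReal.ofReal (condTail k γ α (a, t)) := by
    have h := pi_gaussianReal_real_lt hk (vecRound k a t)
      (lt_of_lt_of_le (by norm_num) (vecRound_bounds hk a t).1) hb
      (Real.sq_sqrt (Finset.sum_nonneg fun _ _ => sq_nonneg _)).symm
      (γ / 2 - α * ∑ r, vecRound k a t r * a r)
    rw [condTail, marginThreshold, ← h, ofReal_measureReal]
    rfl
  have hmc := measurable_condTail k γ α
  rw [measureReal_def, hset, ← Measure.map_apply (hT.prodMap measurable_id) hBm, hmap,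
    Measure.prod_apply_symm hBm, marginTail, integral_eq_lintegral_of_nonneg_ae
      (Filter.Eventually.of_forall (condTail_nonneg k γ α)) hmc.aestronglyMeasurable,
    columnLaw, lintegral_prod_symm' _ (by fun_prop)]
  congr 1
  refine lintegral_congr fun t => ?_
  rw [Measure.prod_apply (hBm.preimage (by fun_prop))]
  exact lintegral_congr fun a => hsec a t

theorem exists_lipschitz_interpolation {p : ℝ → ℝ} {m γ L B : ℝ} (hm : 0 ≤ m) (hγ : 0 < γ)
    (hL : ∀ x ∈ Set.Icc (-m) 0, ∀ y ∈ Set.Icc (-m) 0, |p x - p y| ≤ L * |x - y|) (hL0 : 0 ≤ L)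
    (hp : ∀ x ∈ Set.Icc (-m) 0, 0 ≤ p x ∧ p x ≤ B) :
    ∃ f : ℝ → ℝ, (∀ x ∈ Set.Icc (-m) 0, f x = p x) ∧
      (∀ x, 0 < x → x ≤ γ → f x = (γ - x) / γ * p 0) ∧ (∀ x, γ ≤ x → f x = 0) ∧
      (∀ x y, |f x - f y| ≤ (L + B / γ) * |x - y|) ∧ (∀ x, 0 ≤ f x) ∧ ∀ x, f x ≤ B := by
  have h0 := hp 0 ⟨by linarith, le_rfl⟩
  have hB : 0 ≤ B := h0.1.trans h0.2
  have hz (x : ℝ) : max (-m) (min x 0) ∈ Set.Icc (-m) 0 :=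
    ⟨le_max_left _ _, max_le (by linarith) (min_le_right _ _)⟩
  have ht (x : ℝ) : 0 ≤ min (max x 0 / γ) 1 ∧ min (max x 0 / γ) 1 ≤ 1 :=
    ⟨le_min (div_nonneg (le_max_right _ _) hγ.le) zero_le_one, min_le_right _ _⟩
  have hneg (x : ℝ) (hx : x ≤ 0) : min (max x 0 / γ) 1 = 0 := by
    rw [max_eq_right hx, zero_div, min_eq_left zero_le_one]
  have hpos (x : ℝ) (hx : 0 ≤ x) : max (-m) (min x 0) = 0 := by
    rw [min_eq_right hx, max_eq_right (by linarith)]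
  refine ⟨fun x => p (max (-m) (min x 0)) - p 0 * min (max x 0 / γ) 1, fun x hx => ?_,
    fun x hx hxγ => ?_, fun x hx => ?_, fun x y => ?_, fun x => ?_, fun x => ?_⟩
  · simp only [hneg x hx.2, min_eq_left hx.2, max_eq_right hx.1, mul_zero, sub_zero]
  · simp only [hpos x hx.le, max_eq_left hx.le, min_eq_left ((div_le_one hγ).2 hxγ)]
    field_simp
  · simp only [hpos x (hγ.le.trans hx), max_eq_left (hγ.le.trans hx),
      min_eq_right ((one_le_div hγ).2 hx), mul_one, sub_self]
  · have e1 : |max (-m) (min x 0) - max (-m) (min y 0)| ≤ |x - y| := by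
      rw [max_comm, max_comm (-m)]
      exact (abs_sup_sub_sup_le_abs (min x 0) (min y 0) (-m)).trans (abs_inf_sub_inf_le_abs x y 0)
    have e2 : |min (max y 0 / γ) 1 - min (max x 0 / γ) 1| ≤ |x - y| / γ := by
      refine (abs_inf_sub_inf_le_abs _ _ _).trans ?_
      rw [← sub_div, abs_div, abs_of_pos hγ, abs_sub_comm]
      exact div_le_div_of_nonneg_right (abs_sup_sub_sup_le_abs x y 0) hγ.le
    have e : p (max (-m) (min x 0)) - p 0 * min (max x 0 / γ) 1 -
        (p (max (-m) (min y 0)) - p 0 * min (max y 0 / γ) 1) =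
        (p (max (-m) (min x 0)) - p (max (-m) (min y 0))) +
          p 0 * (min (max y 0 / γ) 1 - min (max x 0 / γ) 1) := by ring
    calc _ ≤ |p (max (-m) (min x 0)) - p (max (-m) (min y 0))| +
          |p 0 * (min (max y 0 / γ) 1 - min (max x 0 / γ) 1)| := by
          rw [e]
          exact abs_add_le _ _
      _ ≤ L * |x - y| + B * (|x - y| / γ) := by
          refine add_le_add ((hL _ (hz x) _ (hz y)).trans (by gcongr)) ?_
          rw [abs_mul, abs_of_nonneg h0.1]
          gcongr
          exact h0.2
      _ = _ := by ring
  · rcases le_total x 0 with hx | hx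
    · simp only [hneg x hx, mul_zero, sub_zero]
      exact (hp _ (hz x)).1
    · simp only [hpos x hx]
      nlinarith [ht x]
  · have := mul_nonneg h0.1 (ht x).1
    linarith [(hp _ (hz x)).2]

theorem marginPoint_zero {d : ℕ} (hd : 0 < d) (α : ℝ) : marginPoint d α 0 = α := by
  have : (0 : Fin (d + 1)) ≠ Fin.last d := by
    simp [Fin.ext_iff]
    omega
  simp [marginPoint, this]

theorem marginPoint_last {d : ℕ} (hd : 0 < d) (α : ℝ) :
    marginPoint d α (Fin.last d) = √(1 - α ^ 2) := by
  have : Fin.last d ≠ (0 : Fin (d + 1)) := by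
    simp [Fin.ext_iff]
    omega
  simp [marginPoint, this]

theorem marginPoint_mem_Xset {d : ℕ} (hd : 0 < d) {α c : ℝ} (hα : |α| ≤ c) (hc : c ≤ 1) :
    marginPoint d α ∈ Xset d c := by
  have hsq : α ^ 2 ≤ c ^ 2 := sq_le_sq' (by linarith [neg_abs_le α]) ((le_abs_self α).trans hα)
  have hs : √(1 - α ^ 2) ^ 2 = 1 - α ^ 2 :=
    Real.sq_sqrt (by nlinarith [(abs_nonneg α).trans hα])
  have h1 : ∑ j, marginPoint d α j ^ 2 = 1 := by
    simp_rw [pow_two]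
    rw [sum_mul_marginPoint, marginPoint_zero hd, marginPoint_last hd]
    linear_combination hs
  refine ⟨h1, ?_⟩
  rw [Fin.sum_univ_castSucc, marginPoint_last hd, hs] at h1
  linarith

theorem single_mem_Hset {d : ℕ} (hd : 0 < d) : Pi.single 0 1 ∈ Hset d := by
  have : Fin.last d ≠ (0 : Fin (d + 1)) := by
    simp [Fin.ext_iff]
    omega
  refine ⟨?_, by simp [this]⟩
  simp [Pi.single_apply]

theorem dotp_single_marginPoint {d : ℕ} (hd : 0 < d) (α : ℝ) :
    1 * dotp (Pi.single 0 1) (marginPoint d α) = α := by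
  simp [dotp, Pi.single_apply, marginPoint_zero hd]

theorem measurable_hRound {k m : ℕ} (w : Fin m → ℝ) (r : Fin k) :
    Measurable fun p : (Fin k → Fin m → ℝ) × (Fin k → ℝ) => hRound p.1 p.2 w r :=
  (measurable_vecRound k r).comp (by unfold matVec; fun_prop : Measurable fun p :
    (Fin k → Fin m → ℝ) × (Fin k → ℝ) => (matVec p.1 w, p.2))

theorem exists_lipschitz_of_phiSpec {d k : ℕ} (hd : 0 < d) (hk : 4 ≤ k) {γ : ℝ} (hγ : 0 < γ)
    (hγ1 : γ ≤ 1 / 2) {φ : ℝ → ℝ} (hφ : phiSpec d k (1 / 2) γ φ) :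
    ∃ f : ℝ → ℝ, (∀ x, |x| ≤ 1 / 2 → φ x = f x) ∧
      (∀ x y, |f x - f y| ≤ (54 * √k * Real.exp (-(k * γ ^ 2 / 3200)) +
        3 * Real.exp (-(k * γ ^ 2 / 3200)) / γ) * |x - y|) ∧
      (∀ x, 0 ≤ f x) ∧ ∀ x, f x ≤ 3 * Real.exp (-(k * γ ^ 2 / 3200)) := by
  obtain ⟨f, h1, h2, h3, h4, h5, h6⟩ := exists_lipschitz_interpolation (p := marginTail k γ)
    (m := 1 / 2) (by norm_num) hγ
    (fun x hx y hy => abs_marginTail_sub_le hk hγ.le (by linarith) (Or.inl ⟨hx, hy⟩))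
    (by positivity) (fun x hx => ⟨marginTail_nonneg k γ x, marginTail_le hk hγ.le (by linarith) hx⟩)
  have hneg (x : ℝ) (hx : |x| ≤ 1 / 2) (hx0 : x ≤ 0) : φ x = marginTail k γ x := by
    have h := hφ.1 (Pi.single 0 1) (marginPoint d x) 1 (single_mem_Hset hd)
      (marginPoint_mem_Xset hd hx (by norm_num)) (Or.inl rfl)
      (by rwa [dotp_single_marginPoint hd])
    rw [dotp_single_marginPoint hd] at h
    rw [h, ← roundMeasure_real_marginPoint hd (by omega) γ hx, measureReal_def]
  refine ⟨f, fun x hx => ?_, h4, h5, h6⟩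
  obtain ⟨hxl, hxr⟩ := abs_le.1 hx
  rcases le_or_gt x 0 with hx0 | hx0
  · rw [hneg x hx hx0, h1 x ⟨hxl, hx0⟩]
  rcases le_or_gt x γ with hxγ | hxγ
  · rw [h2 x hx0 hxγ, hφ.2.1 x hx0 hxγ, hneg 0 (by norm_num) le_rfl]
  · rw [h3 x hxγ.le, hφ.2.2 x hxγ hxr]

theorem exists_lipschitz_of_rhoSpec {d k : ℕ} (hd : 0 < d) (hk : 4 ≤ k) {γ : ℝ} (hγ : 0 < γ)
    (hγ1 : γ ≤ 1 / 2) {ρ : ℝ → ℝ} (hρ : rhoSpec d k (1 / 2) γ ρ) :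
    ∃ f : ℝ → ℝ, (∀ x, |x| ≤ 1 / 2 → ρ x = f x) ∧
      (∀ x y, |f x - f y| ≤ (54 * √k * Real.exp (-(k * γ ^ 2 / 3200)) +
        3 * Real.exp (-(k * γ ^ 2 / 3200)) / γ) * |x - y|) ∧
      (∀ x, 0 ≤ f x) ∧ ∀ x, f x ≤ 3 * Real.exp (-(k * γ ^ 2 / 3200)) := by
  obtain ⟨f, h1, h2, h3, h4, h5, h6⟩ := exists_lipschitz_interpolation
    (p := fun z => 1 - marginTail k γ (γ - z)) (m := 1 / 2 - γ) (by linarith) hγ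
    (L := 54 * √k * Real.exp (-(k * γ ^ 2 / 3200))) (B := 3 * Real.exp (-(k * γ ^ 2 / 3200)))
    (fun x hx y hy => by
      have h := abs_marginTail_sub_le (α := γ - y) (β := γ - x) hk hγ.le (by linarith)
        (Or.inr ⟨⟨by linarith [hy.2], by linarith [hy.1]⟩,
          ⟨by linarith [hx.2], by linarith [hx.1]⟩⟩)
      rw [show γ - y - (γ - x) = x - y by ring] at h
      rwa [sub_sub_sub_cancel_left])
    (by positivity)
    (fun x hx => ⟨one_sub_marginTail_nonneg k γ _, one_sub_marginTail_le hk hγ.le (by linarith)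
      ⟨by linarith [hx.2], by linarith [hx.1]⟩⟩)
  have hw := single_mem_Hset hd
  have hcompl (x : ℝ) (hx : |x| ≤ 1 / 2) : (roundMeasure k (d + 1) {p | 1 * ∑ r,
      hRound p.1 p.2 (Pi.single 0 1) r * ∑ s, p.1 r s * marginPoint d x s ≤ γ / 2}).toReal =
      1 - marginTail k γ x := by
    have := measurable_hRound (k := k) (Pi.single (0 : Fin (d + 1)) (1 : ℝ))
    rw [← roundMeasure_real_marginPoint hd (by omega) γ hx, ← probReal_compl_eq_one_sub
      (measurableSet_lt (by fun_prop) (by fun_prop)), measureReal_def]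
    congr 2
    ext p
    simp
  refine ⟨fun x => f (γ - x), fun x hx => ?_, fun x y => ?_, fun x => h5 _, fun x => h6 _⟩
  · change ρ x = f (γ - x)
    obtain ⟨hxl, hxr⟩ := abs_le.1 hx
    rcases le_or_gt x 0 with hx0 | hx0
    · rw [h3 _ (by linarith), hρ.2.2 x (by linarith) hx0]
    rcases le_or_gt x γ with hxγ | hxγ
    · have hγ' : |γ| ≤ 1 / 2 := by rwa [abs_of_pos hγ]
      rw [hρ.2.1 x hx0 hxγ _ _ 1 hw (marginPoint_mem_Xset hd hγ' (by norm_num)) (Or.inl rfl)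
        (dotp_single_marginPoint hd γ), hcompl γ hγ']
      rcases hxγ.eq_or_lt with rfl | hlt
      · rw [h1 _ ⟨by linarith, by linarith⟩, div_self hx0.ne']
        simp
      · rw [h2 _ (by linarith) (by linarith)]
        simp
    · have h := hρ.1 (Pi.single 0 1) (marginPoint d x) 1 hw
        (marginPoint_mem_Xset hd hx (by norm_num)) (Or.inl rfl)
        (by rwa [dotp_single_marginPoint hd])
      rw [dotp_single_marginPoint hd, hcompl x hx] at h
      rw [h, h1 _ ⟨by linarith, by linarith⟩, sub_sub_cancel]
  · have h := h4 (γ - x) (γ - y)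
    rwa [sub_sub_sub_cancel_left, abs_sub_comm y] at h

theorem measurableSet_Xset (d : ℕ) (c : ℝ) : MeasurableSet (Xset d c) :=
  (measurableSet_eq_fun (f := fun x : Fin (d + 1) → ℝ => ∑ j, x j ^ 2) (by fun_prop)
    measurable_const).inter (measurableSet_le
      (f := fun x : Fin (d + 1) → ℝ => ∑ j : Fin d, x j.castSucc ^ 2) (by fun_prop)
      measurable_const)

theorem measurableSet_labelled_Xset (d : ℕ) (c : ℝ) :
    MeasurableSet {p : (Fin (d + 1) → ℝ) × ℝ | p.1 ∈ Xset d c ∧ (p.2 = 1 ∨ p.2 = -1)} :=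
  (measurable_fst (measurableSet_Xset d c)).inter
    ((measurable_snd (measurableSet_singleton 1)).union
      (measurable_snd (measurableSet_singleton (-1))))

theorem abs_dotp_le {d : ℕ} {c : ℝ} (hc : 0 ≤ c) {w x : Fin (d + 1) → ℝ} (hw : w ∈ Hset d)
    (hx : x ∈ Xset d c) : |dotp w x| ≤ c := by
  refine abs_le_of_sq_le_sq ?_ hc
  have h1 := hw.1
  rw [Fin.sum_univ_castSucc, hw.2] at h1
  simp only [ne_eq, OfNat.ofNat_ne_zero, not_false_eq_true, zero_pow, add_zero] at h1
  rw [dotp, Fin.sum_univ_castSucc, hw.2, zero_mul, add_zero]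
  refine (Finset.sum_mul_sq_le_sq_mul_sq _ _ _).trans ?_
  rw [h1, one_mul]
  exact hx.2

theorem trainM_deviation_le {d n : ℕ} (hn : 1 ≤ n) {c : ℝ} (hc : 0 ≤ c)
    (D : Measure ((Fin (d + 1) → ℝ) × ℝ)) [IsProbabilityMeasure D]
    (hD : ∀ᵐ p ∂D, p.1 ∈ Xset d c ∧ (p.2 = 1 ∨ p.2 = -1)) {ψ f : ℝ → ℝ}
    (hψ : ∀ x, |x| ≤ c → ψ x = f x) {L B : ℝ} (hL : 0 ≤ L) (hB : 0 < B)
    (hf : ∀ x y, |f x - f y| ≤ L * |x - y|) (hf0 : ∀ x, 0 ≤ f x) (hfB : ∀ x, f x ≤ B)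
    {δ : ℝ} (hδ : 0 < δ) (hδ1 : δ ≤ 1) :
    trainM D n {S | (∀ r, (S r).1 ∈ Xset d c ∧ ((S r).2 = 1 ∨ (S r).2 = -1)) ∧
      ∃ w ∈ Hset d, 2 * L / √n + B * √(Real.log (1 / δ) / (2 * n)) <
        |(∫ q, ψ (q.2 * dotp w q.1) ∂D) - (∑ r, ψ ((S r).2 * dotp w (S r).1)) / n|} ≤
      ENNReal.ofReal (2 * δ) := by
  set G : Set ((Fin (d + 1) → ℝ) × ℝ) := {p | p.1 ∈ Xset d c ∧ (p.2 = 1 ∨ p.2 = -1)} with hG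
  have hGm : MeasurableSet G := measurableSet_labelled_Xset d c
  set Z : (Fin (d + 1) → ℝ) × ℝ → EuclideanSpace ℝ (Fin (d + 1)) :=
    G.indicator fun p => WithLp.toLp 2 (p.2 • p.1) with hZ
  have hinner (w : EuclideanSpace ℝ (Fin (d + 1))) (p : (Fin (d + 1) → ℝ) × ℝ) :
      inner ℝ w (Z p) = G.indicator (fun p => p.2 * dotp w p.1) p := by
    by_cases hp : p ∈ G
    · rw [hZ, Set.indicator_of_mem hp, Set.indicator_of_mem hp, PiLp.inner_apply, dotp,
        Finset.mul_sum]
      refine Finset.sum_congr rfl fun j _ => ?_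
      simp
      ring
    · rw [hZ, Set.indicator_of_notMem hp, Set.indicator_of_notMem hp, inner_zero_right]
  have hZm (w : EuclideanSpace ℝ (Fin (d + 1))) : Measurable fun p => inner ℝ w (Z p) := by
    simp_rw [hinner]
    unfold dotp
    exact Measurable.indicator (by fun_prop) hGm
  have hnorm (p : (Fin (d + 1) → ℝ) × ℝ) : ‖Z p‖ ≤ 1 := by
    by_cases hp : p ∈ G
    · have h2 : p.2 ^ 2 = 1 := by rcases hp.2 with h | h <;> rw [h] <;> norm_num
      rw [hZ, Set.indicator_of_mem hp, EuclideanSpace.norm_eq]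
      simp [mul_pow, h2, hp.1.1]
    · rw [hZ, Set.indicator_of_notMem hp, norm_zero]
      exact zero_le_one
  refine (measure_mono ?_).trans
    (measure_abs_deviation_le D hZm hnorm hL hB hf hf0 hfB hn hδ hδ1)
  rintro S ⟨hS, w, hw, hlt⟩
  refine ⟨WithLp.toLp 2 w, ?_, ?_⟩
  · rw [EuclideanSpace.norm_eq]
    simp [hw.1]
  have hval (p : (Fin (d + 1) → ℝ) × ℝ) (hp : p ∈ G) :
      ψ (p.2 * dotp w p.1) = f (inner ℝ (WithLp.toLp 2 w) (Z p)) := by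
    rw [hinner, Set.indicator_of_mem hp]
    refine hψ _ ?_
    have h2 : |p.2| = 1 := by rcases hp.2 with h | h <;> rw [h] <;> norm_num
    rw [abs_mul, h2, one_mul]
    exact abs_dotp_le hc hw hp.1
  have hint : ∫ q, ψ (q.2 * dotp w q.1) ∂D = ∫ q, f (inner ℝ (WithLp.toLp 2 w) (Z q)) ∂D :=
    integral_congr_ae (hD.mono fun p hp => hval p hp)
  rwa [hint, Finset.sum_congr rfl fun r _ => hval (S r) (hS r)] at hlt

theorem deviation_bound_le {n k : ℕ} (hn : 1 ≤ n) {γ δ : ℝ} (hγ : 0 < γ)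
    (hk : ((2 * γ) ^ 2)⁻¹ ≤ (k : ℝ)) (hδ : 0 < δ) (hδ1 : δ < 1) :
    2 * (54 * √k * Real.exp (-(k * γ ^ 2 / 3200)) + 3 * Real.exp (-(k * γ ^ 2 / 3200)) / γ) / √n +
      3 * Real.exp (-(k * γ ^ 2 / 3200)) * √(Real.log (1 / (δ / 4)) / (2 * n)) ≤
    12800 * Real.exp (-((2 * γ) ^ 2) * k / 12800) *
      √((k + ((2 * γ) ^ 2)⁻¹ + Real.log (Real.exp 1 / δ)) / n) := by
  have hn0 : (0 : ℝ) < n := by exact_mod_cast hn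
  have e : -((2 * γ) ^ 2) * (k : ℝ) / 12800 = -(k * γ ^ 2 / 3200) := by ring
  rw [e]
  set E := Real.exp (-(k * γ ^ 2 / 3200))
  have hE : 0 < E := Real.exp_pos _
  have hlog : 0 ≤ Real.log (1 / δ) := Real.log_nonneg (by rw [le_div_iff₀ hδ]; linarith)
  have h1 : Real.log (Real.exp 1 / δ) = 1 + Real.log (1 / δ) := by
    rw [div_eq_mul_one_div, Real.log_mul (Real.exp_pos _).ne' (by positivity), Real.log_exp]
  have h2 : Real.log (1 / (δ / 4)) ≤ 2 + Real.log (1 / δ) := by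
    rw [show 1 / (δ / 4) = 2 * 2 * (1 / δ) by field_simp; norm_num,
      Real.log_mul (by norm_num) (by positivity), Real.log_mul (by norm_num) (by norm_num)]
    linarith [Real.log_two_lt_d9]
  have hinv : 0 ≤ ((2 * γ) ^ 2)⁻¹ := by positivity
  have hk0 : (0 : ℝ) ≤ k := Nat.cast_nonneg k
  set V := (k + ((2 * γ) ^ 2)⁻¹ + Real.log (Real.exp 1 / δ)) / n with hV
  have hγk : E / γ ≤ 2 * √k * E := by
    have : (2 * γ)⁻¹ ≤ √k := by
      refine Real.le_sqrt_of_sq_le ?_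
      rwa [inv_pow]
    have h := mul_le_mul_of_nonneg_left this (mul_pos two_pos hE).le
    rw [mul_inv] at h
    calc E / γ = 2 * E * (2⁻¹ * γ⁻¹) := by ring
      _ ≤ 2 * E * √k := h
      _ = _ := by ring
  have hkV : √k / √n ≤ √V := by
    rw [← Real.sqrt_div hk0]
    refine Real.sqrt_le_sqrt (div_le_div_of_nonneg_right ?_ hn0.le)
    linarith
  have hlV : √(Real.log (1 / (δ / 4)) / (2 * n)) ≤ √V := by
    refine Real.sqrt_le_sqrt ?_
    rw [hV, h1, div_le_div_iff₀ (by positivity) hn0]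
    nlinarith
  have hLn : 2 * (54 * √k * E + 3 * E / γ) / √n ≤ 120 * E * (√k / √n) := by
    rw [← mul_div_assoc]
    refine div_le_div_of_nonneg_right ?_ (Real.sqrt_nonneg _)
    rw [mul_div_assoc]
    linarith
  have hs := Real.sqrt_nonneg V
  calc _ ≤ 120 * E * √V + 3 * E * √V :=
        add_le_add (hLn.trans (by gcongr)) (by gcongr)
    _ ≤ _ := by nlinarith [mul_nonneg hE.le hs]

theorem le_measure_of_exceptional {Ω : Type*} [MeasurableSpace Ω] (μ : Measure Ω)
    [IsProbabilityMeasure μ] {T B C : Set Ω} {P : Ω → Prop} (hP : ∀ᵐ ω ∂μ, P ω) {δ : ℝ}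
    (hδ : 0 ≤ δ) (hB : μ B ≤ ENNReal.ofReal (δ / 2)) (hC : μ C ≤ ENNReal.ofReal (δ / 2))
    (h : ∀ ω, P ω → ω ∉ B → ω ∉ C → ω ∈ T) : ENNReal.ofReal (1 - δ) ≤ μ T := by
  rw [ENNReal.ofReal_sub _ hδ, ENNReal.ofReal_one, tsub_le_iff_right]
  have hsub : (Set.univ : Set Ω) ⊆ (T ∪ (B ∪ C)) ∪ {ω | ¬ P ω} := fun ω _ => by
    by_cases h1 : P ω
    · by_cases h2 : ω ∈ B
      · exact Or.inl (Or.inr (Or.inl h2))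
      by_cases h3 : ω ∈ C
      · exact Or.inl (Or.inr (Or.inr h3))
      exact Or.inl (Or.inl (h ω h1 h2 h3))
    · exact Or.inr h1
  calc 1 = μ Set.univ := measure_univ.symm
    _ ≤ μ (T ∪ (B ∪ C)) + μ {ω | ¬ P ω} := (measure_mono hsub).trans (measure_union_le _ _)
    _ = μ (T ∪ (B ∪ C)) := by rw [ae_iff.1 hP, add_zero]
    _ ≤ μ T + (μ B + μ C) :=
      (measure_union_le _ _).trans (add_le_add le_rfl (measure_union_le _ _))
    _ ≤ μ T + (ENNReal.ofReal (δ / 2) + ENNReal.ofReal (δ / 2)) := by gcongr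
    _ = _ := by rw [← ENNReal.ofReal_add (by linarith) (by linarith), add_halves]

/-- (Lemma 3.7, Rademacher bound.) With probability `1 - δ` over the
sample, the empirical averages of `φ(y⟨w,x⟩)` and `ρ(y⟨w,x⟩)` are uniformly close to
their expectations over `H(Γ_i, L_j)`. -/
theorem statement8 : ∃ cγ c c' : ℝ, 0 < cγ ∧ cγ ≤ (Real.sqrt 2)⁻¹ ∧ 0 < c ∧ 0 < c' ∧
    ∀ (d n k : ℕ), 1 ≤ n →
    ∀ i j : ℕ, 1 ≤ i → (2 : ℝ) ^ i ≤ cγ * Real.sqrt n → (2 : ℝ) ^ j ≤ (n : ℝ) →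
    c' * (γhi n i ^ 2)⁻¹ ≤ (k : ℝ) →
    ∀ D : Measure ((Fin (d+1) → ℝ) × ℝ), IsProbabilityMeasure D →
    D {p | p.1 ∈ Xset d cγ ∧ (p.2 = 1 ∨ p.2 = -1)} = 1 →
    ∀ φ ρ : ℝ → ℝ, phiSpec d k cγ (γlo n i) φ → rhoSpec d k cγ (γlo n i) ρ →
    ∀ δ : ℝ, 0 < δ → δ < 1 →
    ENNReal.ofReal (1 - δ) ≤ trainM D n {S |
      ∀ w, w ∈ Hset d → lossD D (3 / 4 * γlo n i) w ∈ Lset n j →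
      |(∫ q, φ (q.2 * dotp w q.1) ∂D) - (∑ r, φ ((S r).2 * dotp w (S r).1)) / n| ≤
        c * Real.exp (-(γhi n i ^ 2) * k / c) *
          Real.sqrt (((k : ℝ) + (γhi n i ^ 2)⁻¹ + Real.log (Real.exp 1 / δ)) / n) ∧
      |(∫ q, ρ (q.2 * dotp w q.1) ∂D) - (∑ r, ρ ((S r).2 * dotp w (S r).1)) / n| ≤
        c * Real.exp (-(γhi n i ^ 2) * k / c) *
          Real.sqrt (((k : ℝ) + (γhi n i ^ 2)⁻¹ + Real.log (Real.exp 1 / δ)) / n)} := by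
  have hsq2 : √2 ≤ 2 := Real.sqrt_le_iff.2 ⟨by norm_num, by norm_num⟩
  refine ⟨1 / 2, 12800, 1, by norm_num, ?_, by norm_num, one_pos, ?_⟩
  · rw [one_div]
    exact inv_anti₀ (by positivity) hsq2
  intro d n k hn i j hi hin _ hk D _ hD φ ρ hφ hρ δ hδ hδ1
  have hn0 : (0 : ℝ) < n := by exact_mod_cast hn
  have : IsProbabilityMeasure (trainM D n) := by
    unfold trainM
    infer_instance
  rcases Nat.eq_zero_or_pos d with rfl | hd
  · refine (ENNReal.ofReal_le_one.2 (by linarith)).trans (le_of_eq ?_)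
    rw [← measure_univ (μ := trainM D n)]
    congr 1
    refine (Set.eq_univ_of_forall fun S w hw => ?_).symm
    have h := hw.1
    simp [show w 0 = 0 from hw.2] at h
  have hγ : 0 < γlo n i := by
    unfold γlo
    positivity
  have hγhi : γhi n i = 2 * γlo n i := by
    obtain ⟨i, rfl⟩ := Nat.exists_eq_add_of_le' hi
    rw [γhi, γlo, Nat.add_sub_cancel, pow_succ]
    ring
  have hγhi2 : γhi n i ≤ 1 / 2 := by
    rw [γhi, div_le_iff₀ (Real.sqrt_pos.2 hn0)]
    exact hin
  rw [hγhi, one_mul] at hk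
  rw [hγhi] at hγhi2 ⊢
  have hk4 : 4 ≤ k := by
    have h1 : (2 * γlo n i) ^ 2 ≤ 1 / 4 := by nlinarith
    have h2 := (inv_anti₀ (by positivity) h1).trans hk
    norm_num at h2
    exact h2
  have hγ2 : γlo n i ≤ 1 / 2 := by linarith
  have hDae : ∀ᵐ p ∂D, p.1 ∈ Xset d (1 / 2) ∧ (p.2 = 1 ∨ p.2 = -1) :=
    (mem_ae_iff_prob_eq_one (measurableSet_labelled_Xset d (1 / 2))).2 hD
  have hSae : ∀ᵐ S ∂trainM D n,
      ∀ r, (S r).1 ∈ Xset d (1 / 2) ∧ ((S r).2 = 1 ∨ (S r).2 = -1) :=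
    ae_all_iff.2 fun r =>
      (measurePreserving_eval (fun _ : Fin n => D) r).quasiMeasurePreserving.ae hDae
  obtain ⟨f, hφf, hf, hf0, hfB⟩ := exists_lipschitz_of_phiSpec hd hk4 hγ hγ2 hφ
  obtain ⟨g, hρg, hg, hg0, hgB⟩ := exists_lipschitz_of_rhoSpec hd hk4 hγ hγ2 hρ
  have hbφ := trainM_deviation_le hn (by norm_num) D hDae hφf (by positivity) (by positivity) hf
    hf0 hfB (δ := δ / 4) (by linarith) (by linarith)
  have hbρ := trainM_deviation_le hn (by norm_num) D hDae hρg (by positivity) (by positivity) hg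
    hg0 hgB (δ := δ / 4) (by linarith) (by linarith)
  rw [show 2 * (δ / 4) = δ / 2 by ring] at hbφ hbρ
  have hbound := deviation_bound_le hn hγ hk hδ hδ1
  refine le_measure_of_exceptional _ hSae hδ.le hbφ hbρ fun S hS h1 h2 w hw _ => ⟨?_, ?_⟩
  · exact (not_lt.1 fun hlt => h1 ⟨hS, w, hw, hlt⟩).trans hbound
  · exact (not_lt.1 fun hlt => h2 ⟨hS, w, hw, hlt⟩).trans hbound
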